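/- For mod_{p*}-almost every S ∈ Γ* (i.e., for all S outside a subfamily whose associated measures H⌞S have zero p*-modulus), cap_p T ≤ C(T) ∫_S ρ₀^{p−1} dH, where ρ₀ is the minimizer of cap_p T and C(T) depends only on the data of T. Consequently, if cap_p T > 0, the function (C(T)/cap_p T) ρ₀^{p−1} is weakly admissible for mod_{p*} T. -/

import Mathlib

open MeasureTheory Metric Set Filter Topology
open scoped ENNReal NNReal unitInterval

noncomputable section

namespace Duality

/-! ### Rectifiable curves, line integrals and upper gradients

A rectifiable path is encoded by its arclength-type parametrization: a `1`-Lipschitz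
map defined on a compact interval `[a, b]`.  The line integral `∫_γ ρ ds` of a
nonnegative Borel function is then the Lebesgue integral of `ρ ∘ γ` over `[a, b]`. -/

structure UPath (X : Type*) [PseudoMetricSpace X] where
  a : ℝ
  b : ℝ
  hab : a ≤ b
  toFun : ℝ → X
  lip : LipschitzOnWith 1 toFun (Set.Icc a b)

namespace UPath

variable {X : Type*} [PseudoMetricSpace X]

/-- starting point of the path -/
def start (γ : UPath X) : X := γ.toFun γ.a

/-- end point of the path -/
def finish (γ : UPath X) : X := γ.toFun γ.b

/-- The line integral `∫_γ ρ ds`. -/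
def integral (γ : UPath X) (ρ : X → ℝ≥0∞) : ℝ≥0∞ :=
  ∫⁻ t in Set.Icc γ.a γ.b, ρ (γ.toFun t)

/-- The image (trace) `|γ|` of the path. -/
def trace (γ : UPath X) : Set X := γ.toFun '' Set.Icc γ.a γ.b

/-- The length of the path. -/
def length (γ : UPath X) : ℝ≥0∞ := eVariationOn γ.toFun (Set.Icc γ.a γ.b)

/-- The path stays inside the set `W`. -/
def InSet (γ : UPath X) (W : Set X) : Prop := ∀ t ∈ Set.Icc γ.a γ.b, γ.toFun t ∈ W

/-- The reparametrization of a rectifiable path as a `Path` (continuous map from `[0,1]`). -/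
def toPath (γ : UPath X) : Path γ.start γ.finish where
  toFun := fun t => γ.toFun (γ.a + (t : ℝ) * (γ.b - γ.a))
  continuous_toFun := by
    have hmem : ∀ t : unitInterval, γ.a + (t : ℝ) * (γ.b - γ.a) ∈ Set.Icc γ.a γ.b := by
      intro t
      obtain ⟨ht0, ht1⟩ := t.2
      constructor
      · nlinarith [γ.hab]
      · nlinarith [γ.hab]
    exact γ.lip.continuousOn.comp_continuous (by continuity) hmem
  source' := by simp [start]
  target' := by simp [finish]

end UPath

/-- `ρ` is an upper gradient of `u`. -/
def IsUpperGradient {X : Type*} [PseudoMetricSpace X] {Y : Type*} [PseudoEMetricSpace Y]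
    (u : X → Y) (ρ : X → ℝ≥0∞) : Prop :=
  ∀ γ : UPath X, edist (u γ.start) (u γ.finish) ≤ γ.integral ρ

/-- The `p`-modulus of a family of (rectifiable) paths. -/
def pathMod {X : Type*} [PseudoMetricSpace X] [MeasurableSpace X]
    (μ : Measure X) (p : ℝ) (Γ : Set (UPath X)) : ℝ≥0∞ :=
  ⨅ (ρ : X → ℝ≥0∞) (_ : Measurable ρ ∧ ∀ γ ∈ Γ, 1 ≤ γ.integral ρ),
    ∫⁻ x, ρ x ^ p ∂μ

/-- `ρ` is a `p`-weak upper gradient of `u`: the upper gradient inequality may fail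
only on a path family of zero `p`-modulus. -/
def IsWeakUpperGradient {X : Type*} [PseudoMetricSpace X] [MeasurableSpace X]
    {Y : Type*} [PseudoEMetricSpace Y] (μ : Measure X) (p : ℝ)
    (u : X → Y) (ρ : X → ℝ≥0∞) : Prop :=
  pathMod μ p {γ : UPath X | ¬ edist (u γ.start) (u γ.finish) ≤ γ.integral ρ} = 0

/-- `ρ` is a `p`-weak upper gradient of `u` in the subset `U`. -/
def IsWeakUpperGradientOn {X : Type*} [PseudoMetricSpace X] [MeasurableSpace X]
    {Y : Type*} [PseudoEMetricSpace Y] (μ : Measure X) (p : ℝ) (U : Set X)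
    (u : X → Y) (ρ : X → ℝ≥0∞) : Prop :=
  pathMod (μ.restrict U) p
    {γ : UPath X | γ.InSet U ∧ ¬ edist (u γ.start) (u γ.finish) ≤ γ.integral ρ} = 0

/-- `ρ` is the minimal `p`-weak upper gradient of `u`: it is a `p`-integrable `p`-weak
upper gradient which is `μ`-a.e. dominated by every other one. -/
def IsMinimalWeakUpperGradient {X : Type*} [PseudoMetricSpace X] [MeasurableSpace X]
    {Y : Type*} [PseudoEMetricSpace Y] (μ : Measure X) (p : ℝ)
    (u : X → Y) (ρ : X → ℝ≥0∞) : Prop :=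
  Measurable ρ ∧ IsWeakUpperGradient μ p u ρ ∧ (∫⁻ x, ρ x ^ p ∂μ) < ⊤ ∧
    ∀ ρ' : X → ℝ≥0∞, Measurable ρ' → IsWeakUpperGradient μ p u ρ' →
      (∫⁻ x, ρ' x ^ p ∂μ) < ⊤ → ∀ᵐ x ∂μ, ρ x ≤ ρ' x

/-! ### Doubling measures, Poincaré inequalities, Ahlfors regularity -/

/-- `μ` is a doubling (Borel) measure with doubling constant `Cμ`:
`0 < μ(2B) ≤ Cμ · μ(B) < ∞` for every ball `B` of radius `r < diam T`. -/
def IsDoubling {X : Type*} [MetricSpace X] [MeasurableSpace X]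
    (μ : Measure X) (Cμ : ℝ≥0∞) : Prop :=
  ∀ (x : X) (r : ℝ), 0 < r → r < Metric.diam (Set.univ : Set X) →
    0 < μ (ball x (2 * r)) ∧ μ (ball x (2 * r)) ≤ Cμ * μ (ball x r) ∧
      Cμ * μ (ball x r) < ⊤

/-- `(X, d, μ)` supports a weak `1`-Poincaré inequality with constants `CP`, `lP`:
`⨍_B |u - u_B| dμ ≤ CP · diam B · ⨍_{lP·B} ρ dμ` for every locally integrable `u`
and every upper gradient `ρ` of `u`, and balls have positive finite measure. -/
def SupportsPoincare {X : Type*} [MetricSpace X] [MeasurableSpace X]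
    (μ : Measure X) (CP lP : ℝ) : Prop :=
  (∀ (x : X) (r : ℝ), 0 < r → 0 < μ (ball x r) ∧ μ (ball x r) < ⊤) ∧
  ∀ (u : X → ℝ) (ρ : X → ℝ≥0∞), LocallyIntegrable u μ → Measurable ρ →
    IsUpperGradient u ρ → ∀ (x : X) (r : ℝ), 0 < r →
      (∫⁻ y in ball x r, ENNReal.ofReal |u y - ⨍ z in ball x r, u z ∂μ| ∂μ) /
          μ (ball x r) ≤
        ENNReal.ofReal (CP * Metric.diam (ball x r)) *
          ((∫⁻ y in ball x (lP * r), ρ y ∂μ) / μ (ball x (lP * r)))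

/-- `μ` is Ahlfors `q`-regular with constants `0 < aA ≤ AA`. -/
def IsAhlforsRegular {X : Type*} [MetricSpace X] [MeasurableSpace X]
    (μ : Measure X) (q aA AA : ℝ) : Prop :=
  0 < aA ∧ aA ≤ AA ∧
    ∀ (x : X) (r : ℝ), 0 < r → r < Metric.diam (Set.univ : Set X) →
      ENNReal.ofReal (aA * r ^ q) ≤ μ (ball x r) ∧
        μ (ball x r) ≤ ENNReal.ofReal (AA * r ^ q)

/-! ### The circle `ℝ/ℤ`, loops and degree -/

lemma intCast_coe_eq_zero (k : ℤ) : ((k : ℝ) : UnitAddCircle) = 0 :=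
  (AddCircle.coe_eq_zero_iff _).mpr ⟨k, by simp⟩

/-- The standard loop of degree `k` in `ℝ/ℤ` based at `y`: `t ↦ y + [k t]`. -/
def stdLoop (k : ℤ) (y : UnitAddCircle) : Path y y where
  toFun := fun t => y + (((k : ℝ) * (t : ℝ) : ℝ) : UnitAddCircle)
  continuous_toFun := by
    refine continuous_const.add ?_
    exact (AddCircle.continuous_mk' 1).comp (by continuity)
  source' := by simp
  target' := by
    have h1 : ((1 : unitInterval) : ℝ) = 1 := rfl
    have h : (((k : ℝ) * ((1 : unitInterval) : ℝ) : ℝ) : UnitAddCircle) = 0 := by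
      rw [h1, mul_one]; exact intCast_coe_eq_zero k
    simp [h]

/-- Concatenation of `n` copies of a loop. -/
def loopPow {X : Type*} [TopologicalSpace X] {x : X} (γ : Path x x) : ℕ → Path x x
  | 0 => Path.refl x
  | n + 1 => (loopPow γ n).trans γ

/-- A loop `γ` based at `x` has degree 1 (relative to the chosen generator `α₀` based
at `x₀`) if it is loop-homotopic to a conjugate `η * α₀ * η⁻¹` of `α₀`. -/
def IsDegreeOneLoop {T : Type*} [TopologicalSpace T] (x₀ : T) (α₀ : Path x₀ x₀)
    {x : T} (γ : Path x x) : Prop :=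
  ∃ η : Path x x₀, Path.Homotopic γ (η.trans (α₀.trans η.symm))

/-- A map `f : T → ℝ/ℤ` has degree `k`: it pushes every degree-1 loop based at `x`
to a loop which is loop-homotopic to `[f x] + k·β`, `β (t) = [t]`. -/
def HasDegree {T : Type*} [TopologicalSpace T] (x₀ : T) (α₀ : Path x₀ x₀)
    (f : T → UnitAddCircle) (k : ℤ) : Prop :=
  ∃ hf : Continuous f, ∀ (x : T) (γ : Path x x), IsDegreeOneLoop x₀ α₀ γ →
    Path.Homotopic (γ.map hf) (stdLoop k (f x))

/-- The class of `α₀` generates `π₁(T, x₀) ≅ ℤ`. -/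
def IsGenerator {T : Type*} [TopologicalSpace T] (x₀ : T) (α₀ : Path x₀ x₀) : Prop :=
  Function.Bijective fun k : ℤ =>
    (FundamentalGroup.fromPath (X := TopCat.of T) ⟦α₀⟧ : FundamentalGroup (TopCat.of T) x₀) ^ k

/-- `T` is semilocally simply connected. -/
def SemilocallySimplyConnected (T : Type*) [TopologicalSpace T] : Prop :=
  ∀ x : T, ∃ U ∈ 𝓝 x, ∀ γ : Path x x, (∀ t, γ t ∈ U) → Path.Homotopic γ (Path.refl x)

/-- `f` is a Lipschitz map of degree 1. -/
def DegOneLip {T : Type*} [MetricSpace T] (x₀ : T) (α₀ : Path x₀ x₀)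
    (f : T → UnitAddCircle) : Prop :=
  (∃ L : ℝ≥0, LipschitzWith L f) ∧ HasDegree x₀ α₀ f 1

/-! ### Capacity and surface modulus -/

/-- The degree 1 `p`-capacity of `T`, defined through minimal `p`-weak upper gradients:
the infimum of `∫ ρ^p dμ` over `p`-weak upper gradients `ρ` of Lipschitz degree-1 maps. -/
def cap {T : Type*} [MetricSpace T] [MeasurableSpace T] (μ : Measure T) (p : ℝ)
    (x₀ : T) (α₀ : Path x₀ x₀) : ℝ≥0∞ :=
  ⨅ (f : T → UnitAddCircle) (_ : DegOneLip x₀ α₀ f) (ρ : T → ℝ≥0∞)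
    (_ : Measurable ρ ∧ IsWeakUpperGradient μ p f ρ),
      ∫⁻ x, ρ x ^ p ∂μ

/-- The pointwise Lipschitz constant `Lip f (x)`. -/
def pLip {T : Type*} [MetricSpace T] (f : T → UnitAddCircle) (x : T) : ℝ≥0∞ :=
  Filter.limsup
    (fun r : ℝ => ⨆ y ∈ ball x r, edist (f x) (f y) / ENNReal.ofReal r) (𝓝[>] (0 : ℝ))

/-- The degree 1 `p`-capacity of `T`, defined through pointwise Lipschitz constants. -/
def capLip {T : Type*} [MetricSpace T] [MeasurableSpace T] (μ : Measure T) (p : ℝ)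
    (x₀ : T) (α₀ : Path x₀ x₀) : ℝ≥0∞ :=
  ⨅ (f : T → UnitAddCircle) (_ : DegOneLip x₀ α₀ f), ∫⁻ x, pLip f x ^ p ∂μ

/-- The codimension 1 spherical Hausdorff measure, as a set function:
`H(A) = sup_{δ>0} inf { ∑ μ(B_i)/r_i }`, the infimum being over countable covers of `A`
by balls `B_i` of radii `r_i ≤ δ`. -/
def codimH {T : Type*} [MetricSpace T] [MeasurableSpace T] (μ : Measure T)
    (A : Set T) : ℝ≥0∞ :=
  ⨆ (δ : ℝ) (_ : 0 < δ),
    ⨅ (c : ℕ → T) (r : ℕ → ℝ) (_ : ∀ i, r i ≤ δ)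
      (_ : A ⊆ ⋃ i, ball (c i) (r i)),
        ∑' i, μ (ball (c i) (r i)) / ENNReal.ofReal (r i)

/-- The integral `∫_S g dH` of `g ≥ 0` over `S` against the codimension 1 Hausdorff
measure, via the layer-cake (Choquet) formula. -/
def choquetIntegral {T : Type*} [MetricSpace T] [MeasurableSpace T] (μ : Measure T)
    (S : Set T) (g : T → ℝ≥0∞) : ℝ≥0∞ :=
  ∫⁻ t in Set.Ioi (0 : ℝ), codimH μ {x | x ∈ S ∧ ENNReal.ofReal t < g x}

/-- The family `Γ*` of all level sets `φ⁻¹[0]` of finite codimension 1 Hausdorff measure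
of continuous degree-1 maps `φ : T → ℝ/ℤ`. -/
def Surfaces {T : Type*} [MetricSpace T] [MeasurableSpace T] (μ : Measure T)
    (x₀ : T) (α₀ : Path x₀ x₀) : Set (Set T) :=
  {S | ∃ φ : T → UnitAddCircle, HasDegree x₀ α₀ φ 1 ∧ S = φ ⁻¹' {0} ∧ codimH μ S < ⊤}

/-- The surface `q`-modulus of a family of surfaces, the surfaces being equipped with the
codimension 1 Hausdorff measure. -/
def surfModOf {T : Type*} [MetricSpace T] [MeasurableSpace T] (μ : Measure T) (q : ℝ)
    (𝒮 : Set (Set T)) : ℝ≥0∞ :=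
  ⨅ (ρ : T → ℝ≥0∞) (_ : Measurable ρ ∧ ∀ S ∈ 𝒮, 1 ≤ choquetIntegral μ S ρ),
    ∫⁻ x, ρ x ^ q ∂μ

/-- The surface modulus `mod_q T`. -/
def surfMod {T : Type*} [MetricSpace T] [MeasurableSpace T] (μ : Measure T) (q : ℝ)
    (x₀ : T) (α₀ : Path x₀ x₀) : ℝ≥0∞ :=
  surfModOf μ q (Surfaces μ x₀ α₀)

/-- The family `Γ*` with the `(q-1)`-dimensional Hausdorff measure instead. -/
def SurfacesH {T : Type*} [MetricSpace T] [MeasurableSpace T] [BorelSpace T] (q : ℝ)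
    (x₀ : T) (α₀ : Path x₀ x₀) : Set (Set T) :=
  {S | ∃ φ : T → UnitAddCircle, HasDegree x₀ α₀ φ 1 ∧ S = φ ⁻¹' {0} ∧ μH[q - 1] S < ⊤}

/-- The surface modulus `mod_q T` defined through the `(q-1)`-dimensional Hausdorff
measures `H^{q-1} ⌞ S`, `S ∈ Γ*`. -/
def surfModH {T : Type*} [MetricSpace T] [MeasurableSpace T] [BorelSpace T]
    (μ : Measure T) (q pstar : ℝ) (x₀ : T) (α₀ : Path x₀ x₀) : ℝ≥0∞ :=
  ⨅ (ρ : T → ℝ≥0∞)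
    (_ : Measurable ρ ∧ ∀ S ∈ SurfacesH (T := T) q x₀ α₀, 1 ≤ ∫⁻ x in S, ρ x ∂μH[q - 1]),
      ∫⁻ x, ρ x ^ pstar ∂μ

/-- The standing assumptions 2.1. -/
def Standing {T : Type*} [MetricSpace T] [MeasurableSpace T] (μ : Measure T)
    (Cμ : ℝ≥0∞) (CP lP : ℝ) (x₀ : T) (α₀ : Path x₀ x₀) : Prop :=
  IsDoubling μ Cμ ∧ SupportsPoincare μ CP lP ∧ SemilocallySimplyConnected T ∧
    IsGenerator x₀ α₀ ∧ ∃ f : T → UnitAddCircle, DegOneLip x₀ α₀ f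

/-! ### The universal cover -/

/-- `π` is a local isometry. -/
def IsLocalIsometry {X Y : Type*} [MetricSpace X] [MetricSpace Y] (π : X → Y) : Prop :=
  ∀ x : X, ∃ ε : ℝ, 0 < ε ∧
    ∀ y ∈ ball x ε, ∀ z ∈ ball x ε, dist (π y) (π z) = dist y z

/-- `(T̃, π)` is the universal cover of `T`, with `T̃` carrying the length metric pulled
back by `π` (so that `π` is a local isometry). -/
def CoverSetup {T Tt : Type*} [MetricSpace T] [MetricSpace Tt] (π : Tt → T) : Prop :=
  IsCoveringMap π ∧ Function.Surjective π ∧ IsLocalIsometry π ∧ SimplyConnectedSpace Tt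

/-- `τ` is the deck transformation of the cover `π` determined by
`τ (γ̃ 0) = γ̃ 1` for every lift `γ̃` of every degree-1 loop `γ`. -/
def IsDeck {T Tt : Type*} [MetricSpace T] [MetricSpace Tt] (π : Tt → T)
    (x₀ : T) (α₀ : Path x₀ x₀) (τ : Tt → Tt) : Prop :=
  Continuous τ ∧ (∀ x, π (τ x) = π x) ∧
    ∀ (x : T) (γ : Path x x), IsDegreeOneLoop x₀ α₀ γ →
      ∀ γt : C(unitInterval, Tt), (∀ t, π (γt t) = γ t) → τ (γt 0) = γt 1

/-- `μ̃` is the natural lift of `μ` to the cover: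
`μ̃ (A) = ∫ #(π⁻¹(x) ∩ A) dμ (x)`. -/
def IsLiftedMeasure {T Tt : Type*} [MetricSpace T] [MeasurableSpace T]
    [MetricSpace Tt] [MeasurableSpace Tt] (π : Tt → T) (μ : Measure T)
    (μt : Measure Tt) : Prop :=
  ∀ A : Set Tt, MeasurableSet A → μt A = ∫⁻ x, ((π ⁻¹' {x} ∩ A).encard : ℝ≥0∞) ∂μ

/-! ### Newtonian spaces -/

/-- The seminorm of `N^{1,p}(U)`. -/
def NSeminorm {X : Type*} [PseudoMetricSpace X] [MeasurableSpace X] (μ : Measure X)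
    (p : ℝ) (U : Set X) (f : X → ℝ) : ℝ≥0∞ :=
  (∫⁻ x in U, ENNReal.ofReal |f x| ^ p ∂μ) ^ (1 / p) +
    ⨅ (ρ : X → ℝ≥0∞) (_ : Measurable ρ ∧ IsWeakUpperGradientOn μ p U f ρ),
      (∫⁻ x in U, ρ x ^ p ∂μ) ^ (1 / p)

/-- `f ∈ N^{1,p}_loc`. -/
def MemNloc {X : Type*} [PseudoMetricSpace X] [MeasurableSpace X] (μ : Measure X)
    (p : ℝ) (f : X → ℝ) : Prop :=
  ∀ U : Set X, IsOpen U → IsCompact (closure U) →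
    (∫⁻ x in U, ENNReal.ofReal |f x| ^ p ∂μ) < ⊤ ∧
      ∃ ρ : X → ℝ≥0∞, Measurable ρ ∧ IsWeakUpperGradientOn μ p U f ρ ∧
        (∫⁻ x in U, ρ x ^ p ∂μ) < ⊤

/-- The collection `F`: nonnegative Borel functions `ρ` on `T` such that `ρ ∘ π` is a
`p`-weak upper gradient of some `f ∈ N^{1,p}_loc (T̃)` with `f ∘ τ - f = 1` a.e. -/
def MemF {T Tt : Type*} [MetricSpace T] [MeasurableSpace T] [MetricSpace Tt]
    [MeasurableSpace Tt] (π : Tt → T) (τ : Tt → Tt) (μt : Measure Tt) (p : ℝ)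
    (ρ : T → ℝ≥0∞) : Prop :=
  Measurable ρ ∧ ∃ f : Tt → ℝ, MemNloc μt p f ∧ (∀ᵐ x ∂μt, f (τ x) - f x = 1) ∧
    IsWeakUpperGradient μt p f (ρ ∘ π)

/-- The capacity `cap_p^F T`. -/
def capF {T Tt : Type*} [MetricSpace T] [MeasurableSpace T] [MetricSpace Tt]
    [MeasurableSpace Tt] (μ : Measure T) (π : Tt → T) (τ : Tt → Tt) (μt : Measure Tt)
    (p : ℝ) : ℝ≥0∞ :=
  ⨅ (ρ : T → ℝ≥0∞) (_ : MemF π τ μt p ρ), ∫⁻ x, ρ x ^ p ∂μ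

/-! ### Miscellaneous operators -/

/-- The restricted Hardy–Littlewood maximal operator `M_R`. -/
def restrMax {T : Type*} [MetricSpace T] [MeasurableSpace T] (μ : Measure T)
    (R : ℝ≥0∞) (g : T → ℝ≥0∞) (x : T) : ℝ≥0∞ :=
  ⨆ (s : ℝ) (_ : 0 < s ∧ ENNReal.ofReal s ≤ R),
    (∫⁻ y in ball x s, g y ∂μ) / μ (ball x s)

/-- The upper Lebesgue integral. -/
def upperLintegral {Y : Type*} [MeasurableSpace Y] (ν : Measure Y)
    (F : Y → ℝ≥0∞) : ℝ≥0∞ :=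
  ⨅ (G : Y → ℝ≥0∞) (_ : Measurable G ∧ ∀ y, F y ≤ G y), ∫⁻ y, G y ∂ν

/-! ### The sets `Ω` and the functions `ψ̃`, `ζ`, `ψ` of Section 4.3 -/

/-- The set of points reachable from `A` by a rectifiable path inside `W`. -/
def reach {T : Type*} [MetricSpace T] (A W : Set T) : Set T :=
  {x | ∃ γ : UPath T, γ.start ∈ A ∧ γ.finish = x ∧ γ.InSet W}

/-- `inf_γ ∫_γ ρ ds` over rectifiable paths connecting `A` to `x` inside `W`. -/
def pathDist {T : Type*} [MetricSpace T] (ρ : T → ℝ≥0∞) (A W : Set T) (x : T) : ℝ≥0∞ :=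
  ⨅ (γ : UPath T) (_ : γ.start ∈ A ∧ γ.finish = x ∧ γ.InSet W), γ.integral ρ

open scoped Classical in
/-- The function `ψ̃`. -/
def psiTilde {T : Type*} [MetricSpace T] (ρ : T → ℝ≥0∞) (A W : Set T) (x : T) : ℝ :=
  if x ∈ reach A W then (pathDist ρ A W x).toReal else 0

/-- The function `min {1, ψ̃}`. -/
def zeta {T : Type*} [MetricSpace T] (ρ : T → ℝ≥0∞) (A W : Set T) (x : T) : ℝ :=
  min 1 (psiTilde ρ A W x)

/-- The competing admissible map `ψ = [min {1, ψ̃}] : T → ℝ/ℤ`. -/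
def psiMap {T : Type*} [MetricSpace T] (ρ : T → ℝ≥0∞) (A W : Set T) (x : T) :
    UnitAddCircle :=
  ((zeta ρ A W x : ℝ) : UnitAddCircle)

end Duality

/-!
Let `S = φ⁻¹{0}` with `φ` of degree one, let `φ̃` be a lift of `φ` to the cover, and let `H` be
the codimension-one measure. For small `r` the integer jump function of `φ` near a point is
locally constant off `S`, and adding its average at scale `r` to `φ̃ - [φ]` gives an equivariant
function whose pointwise Lipschitz constant at `x` is at most `C · H(S ∩ B(x, Λr)) / μ(B(x, r))`:
multiply the jump function by a cutoff of a nearly optimal cover of `S` and apply the Poincaré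
inequality. Hence this smeared surface density belongs to `F`. Testing the first variation
inequality against it and applying Fubini bounds `cap` by `C ∫_S A_s(ρ₀^{p-1}) dH`, where `A_s`
takes averages over balls of radius `s`. Along a suitable sequence `s_n → 0` these averages are at
most `ρ₀^{p-1} + 2⁻ⁿ (1 + G)` everywhere, with `G ∈ L^{p*}` independent of `n`; as `∫_S G dH < ∞`
for `mod_{p*}`-almost every `S`, letting `n → ∞` gives the claim.
-/

namespace Duality

/-! ### Pointwise Lipschitz bounds along intervals and paths -/

lemma continuousWithinAt_of_eventually_edist_le {X Y : Type*} [PseudoEMetricSpace X]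
    [PseudoEMetricSpace Y] {f : X → Y} {s : Set X} {x : X} {K : ℝ≥0∞} (hK : K ≠ ⊤)
    (h : ∀ᶠ y in 𝓝[s] x, edist (f y) (f x) ≤ K * edist y x) : ContinuousWithinAt f s x := by
  have h0 : Tendsto (fun y => K * edist y x) (𝓝[s] x) (𝓝 0) := by
    simpa using ENNReal.Tendsto.const_mul
      (tendsto_iff_edist_tendsto_0.1 (tendsto_nhdsWithin_of_tendsto_nhds tendsto_id)) (.inr hK)
  exact tendsto_iff_edist_tendsto_0.2
    (tendsto_of_tendsto_of_tendsto_of_le_of_le' tendsto_const_nhds h0 (by simp) h)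

lemma continuous_of_eventually_edist_le {X Y : Type*} [PseudoEMetricSpace X]
    [PseudoEMetricSpace Y] {f : X → Y} {K : ℝ≥0∞} (hK : K ≠ ⊤)
    (h : ∀ x, ∀ᶠ y in 𝓝 x, edist (f y) (f x) ≤ K * edist y x) : Continuous f :=
  continuous_iff_continuousAt.2 fun x => continuousWithinAt_univ f x |>.1 <|
    continuousWithinAt_of_eventually_edist_le hK (by simpa using h x)

lemma lipschitzOnWith_Icc_of_eventually_edist_le {Y : Type*} [PseudoMetricSpace Y] {F : ℝ → Y}
    {M : ℝ≥0} {a b : ℝ}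
    (h : ∀ t ∈ Icc a b, ∀ᶠ s in 𝓝[Icc a b] t, edist (F s) (F t) ≤ M * edist s t) :
    LipschitzOnWith M F (Icc a b) := by
  have hcont : ContinuousOn F (Icc a b) := fun t ht =>
    continuousWithinAt_of_eventually_edist_le ENNReal.coe_ne_top (h t ht)
  have hmono : ∀ s ∈ Icc a b, ∀ t ∈ Icc a b, s ≤ t → dist (F t) (F s) ≤ M * (t - s) := by
    intro s hs t ht hst
    have hsub : Icc s t ⊆ Icc a b := Icc_subset_Icc hs.1 ht.2
    refine image_le_of_liminf_slope_right_le_deriv_boundary (f := fun x => dist (F x) (F s))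
      (B := fun x => M * (x - s)) (B' := fun _ => M)
      (fun x hx => (hcont.mono hsub x hx).dist tendsto_const_nhds)
      (by simp) (by fun_prop) (fun x _ => ?_) (fun x hx r hr => ?_) (right_mem_Icc.2 hst)
    · simpa using (((hasDerivAt_id x).sub_const s).const_mul (M : ℝ)).hasDerivWithinAt
    · have hle : 𝓝[>] x ≤ 𝓝[Icc a b] x := by
        rw [← nhdsWithin_Ioc_eq_nhdsGT hx.2]
        exact nhdsWithin_mono _ fun y hy => hsub ⟨hx.1.trans hy.1.le, hy.2⟩
      refine Eventually.frequently ?_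
      filter_upwards [hle (h x (hsub ⟨hx.1, hx.2.le⟩)), self_mem_nhdsWithin] with z hz hxz
      have hxz : 0 < z - x := sub_pos.2 hxz
      have hz : dist (F z) (F x) ≤ M * (z - x) := by
        rw [← abs_of_pos hxz, ← Real.dist_eq]
        simpa only [edist_nndist, dist_nndist, ← ENNReal.coe_mul, ENNReal.coe_le_coe,
          ← NNReal.coe_mul, NNReal.coe_le_coe] using hz
      refine lt_of_le_of_lt ?_ hr
      rw [slope_def_field, div_le_iff₀ hxz]
      linarith [dist_triangle (F z) (F x) (F s)]
  refine LipschitzOnWith.of_dist_le_mul fun s hs t ht => ?_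
  rw [Real.dist_eq]
  rcases le_total s t with hst | hst
  · rw [dist_comm, abs_sub_comm, abs_of_nonneg (sub_nonneg.2 hst)]
    exact hmono s hs t ht hst
  · rw [abs_of_nonneg (sub_nonneg.2 hst)]
    exact hmono t ht s hs hst

lemma edist_le_lintegral_of_eventually_edist_le {F : ℝ → ℝ} {g : ℝ → ℝ≥0∞} {M : ℝ≥0} {a b : ℝ}
    (hab : a ≤ b) (hM : ∀ t ∈ Icc a b, g t ≤ M)
    (h : ∀ t ∈ Icc a b, ∀ᶠ s in 𝓝[Icc a b] t, edist (F s) (F t) ≤ g t * edist s t) :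
    edist (F a) (F b) ≤ ∫⁻ t in Icc a b, g t := by
  have hlip : LipschitzOnWith M F (Icc a b) :=
    lipschitzOnWith_Icc_of_eventually_edist_le fun t ht =>
      (h t ht).mono fun s hs => hs.trans (by gcongr; exact hM t ht)
  have hac : AbsolutelyContinuousOnInterval F a b :=
    LipschitzOnWith.absolutelyContinuousOnInterval (by rwa [uIcc_of_le hab])
  have hderiv : ∀ t ∈ Ioo a b, DifferentiableAt ℝ F t → ‖deriv F t‖ₑ ≤ g t := by
    intro t ht hdiff
    have hmem := Ioo_subset_Icc_self ht
    have hg : g t ≠ ⊤ := ((hM t hmem).trans_lt ENNReal.coe_lt_top).ne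
    have hev := h t hmem
    rw [nhdsWithin_eq_nhds.2 (Icc_mem_nhds ht.1 ht.2)] at hev
    rw [← ofReal_norm]
    refine ENNReal.ofReal_le_of_le_toReal
      (hdiff.hasDerivAt.le_of_lip' ENNReal.toReal_nonneg (hev.mono fun s hs => ?_))
    have := ENNReal.toReal_mono (ENNReal.mul_ne_top hg (edist_ne_top _ _)) hs
    simpa only [ENNReal.toReal_mul, ← dist_edist, dist_eq_norm] using this
  calc edist (F a) (F b) = ‖∫ t in a..b, deriv F t‖ₑ := by
        rw [hac.integral_deriv_eq_sub, edist_comm, edist_eq_enorm_sub]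
    _ ≤ ∫⁻ t in Ioo a b, ‖deriv F t‖ₑ := by
        rw [intervalIntegral.integral_of_le hab, restrict_Ioo_eq_restrict_Ioc]
        exact enorm_integral_le_lintegral_enorm _
    _ ≤ ∫⁻ t in Ioo a b, g t := lintegral_mono_ae <| (ae_restrict_iff' measurableSet_Ioo).2 <| by
        filter_upwards [hac.ae_differentiableAt] with t ht hmem
        exact hderiv t hmem (ht (by simpa only [uIcc_of_le hab] using Ioo_subset_Icc_self hmem))
    _ ≤ ∫⁻ t in Icc a b, g t := lintegral_mono_set Ioo_subset_Icc_self

namespace UPath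

variable {X : Type*} [PseudoMetricSpace X] (γ : UPath X)

lemma edist_le_integral_of_eventually_edist_le {u : X → ℝ} {G : X → ℝ≥0∞} {M : ℝ≥0}
    (hM : ∀ t ∈ Icc γ.a γ.b, G (γ.toFun t) ≤ M)
    (h : ∀ t ∈ Icc γ.a γ.b, ∀ᶠ z in 𝓝 (γ.toFun t),
      edist (u z) (u (γ.toFun t)) ≤ G (γ.toFun t) * edist z (γ.toFun t)) :
    edist (u γ.start) (u γ.finish) ≤ γ.integral G := by
  refine edist_le_lintegral_of_eventually_edist_le (F := u ∘ γ.toFun) (M := M) γ.hab hM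
    fun t ht => ?_
  filter_upwards [(γ.lip.continuousOn t ht).eventually (h t ht), self_mem_nhdsWithin]
    with s hs hmem
  refine hs.trans ?_
  gcongr
  simpa using γ.lip hmem ht

/-- A path leaving a closed ball spends a positive amount of time outside the open ball. -/
lemma integral_eq_top_of_notMem_closedBall (hab : γ.a < γ.b) {ρ : X → ℝ≥0∞} {x : X} {R : ℝ}
    (hρ : ∀ y, y ∉ ball x R → ρ y = ⊤) {t : ℝ} (ht : t ∈ Icc γ.a γ.b)
    (hout : γ.toFun t ∉ closedBall x R) : γ.integral ρ = ⊤ := by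
  obtain ⟨U, hU, htU, hsub⟩ := mem_nhdsWithin.1
    (γ.lip.continuousOn t ht (isClosed_closedBall.isOpen_compl.mem_nhds hout))
  have hvol : volume (U ∩ Ioo γ.a γ.b) ≠ 0 :=
    ((hU.inter isOpen_Ioo).measure_pos _ (mem_closure_iff.1
      (by rwa [closure_Ioo hab.ne]) U hU htU)).ne'
  have htop : ∀ s ∈ U ∩ Ioo γ.a γ.b, ⊤ ≤ ρ (γ.toFun s) := fun s hs =>
    (hρ _ fun hb => hsub ⟨hs.1, Ioo_subset_Icc_self hs.2⟩ (ball_subset_closedBall hb)).ge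
  refine eq_top_iff.2 ?_
  calc ⊤ = ∫⁻ _ in U ∩ Ioo γ.a γ.b, (⊤ : ℝ≥0∞) := by
        rw [setLIntegral_const, ENNReal.top_mul hvol]
    _ ≤ ∫⁻ s in U ∩ Ioo γ.a γ.b, ρ (γ.toFun s) :=
        setLIntegral_mono' (hU.inter isOpen_Ioo).measurableSet htop
    _ ≤ γ.integral ρ := lintegral_mono_set (inter_subset_right.trans Ioo_subset_Icc_self)

end UPath

lemma isUpperGradient_of_eventually_edist_le {X : Type*} [PseudoMetricSpace X] {u : X → ℝ}
    {G : X → ℝ≥0∞} {M : ℝ≥0} (hM : ∀ x, G x ≤ M)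
    (h : ∀ x, ∀ᶠ y in 𝓝 x, edist (u y) (u x) ≤ G x * edist y x) : IsUpperGradient u G :=
  fun γ => γ.edist_le_integral_of_eventually_edist_le (fun _ _ => hM _) fun _ _ => h _

/-! ### The codimension 1 Hausdorff measure -/

section Hausdorff

variable {T : Type*} [MetricSpace T] [MeasurableSpace T]

/-- The codimension 1 Hausdorff content at scale `δ`, i.e. the infimum in the definition of
`codimH`. -/
def codimContent (μ : Measure T) (δ : ℝ) (A : Set T) : ℝ≥0∞ :=
  ⨅ (c : ℕ → T) (r : ℕ → ℝ) (_ : ∀ i, r i ≤ δ) (_ : A ⊆ ⋃ i, ball (c i) (r i)),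
    ∑' i, μ (ball (c i) (r i)) / ENNReal.ofReal (r i)

variable (μ : Measure T)

lemma codimH_eq_iSup_codimContent (A : Set T) :
    codimH μ A = ⨆ (δ : ℝ) (_ : 0 < δ), codimContent μ δ A := rfl

variable {μ} in
lemma codimContent_le {δ : ℝ} {A : Set T} {c : ℕ → T} {r : ℕ → ℝ} (hr : ∀ i, r i ≤ δ)
    (hA : A ⊆ ⋃ i, ball (c i) (r i)) :
    codimContent μ δ A ≤ ∑' i, μ (ball (c i) (r i)) / ENNReal.ofReal (r i) :=
  iInf_le_of_le c <| iInf_le_of_le r <| iInf_le_of_le hr <| iInf_le_of_le hA le_rfl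

variable {μ} in
lemma exists_cover_of_codimContent_lt {δ : ℝ} {A : Set T} {b : ℝ≥0∞}
    (h : codimContent μ δ A < b) :
    ∃ (c : ℕ → T) (r : ℕ → ℝ), (∀ i, r i ≤ δ) ∧ (A ⊆ ⋃ i, ball (c i) (r i)) ∧
      ∑' i, μ (ball (c i) (r i)) / ENNReal.ofReal (r i) < b := by
  simpa only [codimContent, iInf_lt_iff, exists_prop] using h

lemma codimContent_le_codimH {δ : ℝ} (hδ : 0 < δ) (A : Set T) :
    codimContent μ δ A ≤ codimH μ A :=
  le_iSup₂ (f := fun (δ : ℝ) (_ : 0 < δ) => codimContent μ δ A) δ hδ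

variable {μ} in
lemma exists_finset_cover_of_codimH_lt {K : Set T} (hK : IsCompact K) {η : ℝ}
    (hη : 0 < η) {b : ℝ≥0∞} (hb : codimH μ K < b) :
    ∃ (F : Finset ℕ) (z : ℕ → T) (r : ℕ → ℝ), (∀ i ∈ F, 0 < r i) ∧ (∀ i ∈ F, r i ≤ η) ∧
      K ⊆ ⋃ i ∈ F, ball (z i) (r i) ∧
      ∑ i ∈ F, μ (ball (z i) (r i)) / ENNReal.ofReal (r i) ≤ b := by
  obtain ⟨z, r, hr, hcov, hlt⟩ :=
    exists_cover_of_codimContent_lt ((codimContent_le_codimH μ hη K).trans_lt hb)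
  obtain ⟨F, hF⟩ := hK.elim_finite_subcover _ (fun _ => isOpen_ball) hcov
  refine ⟨F.filter fun i => 0 < r i, z, r, fun i hi => (Finset.mem_filter.1 hi).2,
    fun i _ => hr i, fun y hy => ?_, (ENNReal.sum_le_tsum _).trans hlt.le⟩
  obtain ⟨i, hi, hyi⟩ := mem_iUnion₂.1 (hF hy)
  exact mem_iUnion₂.2 ⟨i, Finset.mem_filter.2 ⟨hi, pos_of_mem_ball hyi⟩, hyi⟩

lemma codimContent_mono (δ : ℝ) {A B : Set T} (h : A ⊆ B) :
    codimContent μ δ A ≤ codimContent μ δ B := by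
  refine le_of_forall_gt fun b hb => ?_
  obtain ⟨c, r, hr, hB, hlt⟩ := exists_cover_of_codimContent_lt hb
  exact (codimContent_le hr (h.trans hB)).trans_lt hlt

lemma codimContent_anti {δ δ' : ℝ} (h : δ ≤ δ') (A : Set T) :
    codimContent μ δ' A ≤ codimContent μ δ A := by
  refine le_of_forall_gt fun b hb => ?_
  obtain ⟨c, r, hr, hB, hlt⟩ := exists_cover_of_codimContent_lt hb
  exact (codimContent_le (fun i => (hr i).trans h) hB).trans_lt hlt

lemma codimContent_iUnion_le (δ : ℝ) (s : ℕ → Set T) :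
    codimContent μ δ (⋃ n, s n) ≤ ∑' n, codimContent μ δ (s n) := by
  refine ENNReal.le_of_forall_pos_le_add fun ε hε hfin => ?_
  obtain ⟨ε', hε', hsum⟩ := ENNReal.exists_pos_sum_of_countable (ι := ℕ)
    (ENNReal.coe_ne_zero.2 hε.ne')
  have hlt : ∀ n, codimContent μ δ (s n) < codimContent μ δ (s n) + ε' n := fun n =>
    ENNReal.lt_add_right ((ENNReal.le_tsum n).trans_lt hfin).ne
      (ENNReal.coe_ne_zero.2 (hε' n).ne')
  choose c r hr hcov hsm using fun n => exists_cover_of_codimContent_lt (hlt n)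
  have hcov' : ⋃ n, s n ⊆ ⋃ k : ℕ, ball (c k.unpair.1 k.unpair.2) (r k.unpair.1 k.unpair.2) := by
    refine iUnion_subset fun n x hx => ?_
    obtain ⟨i, hi⟩ := mem_iUnion.1 (hcov n hx)
    exact mem_iUnion.2 ⟨Nat.pair n i, by simpa only [Nat.unpair_pair] using hi⟩
  calc codimContent μ δ (⋃ n, s n)
      ≤ ∑' k : ℕ, μ (ball (c k.unpair.1 k.unpair.2) (r k.unpair.1 k.unpair.2)) /
          ENNReal.ofReal (r k.unpair.1 k.unpair.2) := codimContent_le (fun _ => hr _ _) hcov'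
    _ = ∑' n, ∑' i, μ (ball (c n i) (r n i)) / ENNReal.ofReal (r n i) := by
        rw [← ENNReal.tsum_prod, ← Nat.pairEquiv.symm.tsum_eq]
        rfl
    _ ≤ ∑' n, (codimContent μ δ (s n) + ε' n) := ENNReal.tsum_le_tsum fun n => (hsm n).le
    _ = ∑' n, codimContent μ δ (s n) + ∑' n, (ε' n : ℝ≥0∞) := ENNReal.tsum_add
    _ ≤ ∑' n, codimContent μ δ (s n) + ε := by gcongr

/-- The balls of a cover that miss `A` can be discarded, by giving them radius `0`. -/
lemma codimContent_le_tsum_indicator {δ : ℝ} (hδ : 0 ≤ δ) {A : Set T} {c : ℕ → T} {r : ℕ → ℝ}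
    (hr : ∀ i, r i ≤ δ) (hA : A ⊆ ⋃ i, ball (c i) (r i)) :
    codimContent μ δ A ≤ ∑' i, {i | (ball (c i) (r i) ∩ A).Nonempty}.indicator
      (fun i => μ (ball (c i) (r i)) / ENNReal.ofReal (r i)) i := by
  set J := {i | (ball (c i) (r i) ∩ A).Nonempty}
  refine (codimContent_le (c := c) (r := J.indicator r) (fun i => ?_) fun x hx => ?_).trans
    (ENNReal.tsum_le_tsum fun i => ?_)
  · exact indicator_apply_le' (fun _ => hr i) fun _ => hδ
  · obtain ⟨i, hi⟩ := mem_iUnion.1 (hA hx)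
    exact mem_iUnion.2 ⟨i, by rwa [indicator_of_mem (show i ∈ J from ⟨x, hi, hx⟩)]⟩
  · by_cases hi : i ∈ J <;> simp [hi]

lemma codimContent_add_le_of_le_dist {δ : ℝ} (hδ : 0 ≤ δ) {s t : Set T}
    (hst : ∀ x ∈ s, ∀ y ∈ t, 2 * δ ≤ dist x y) :
    codimContent μ δ s + codimContent μ δ t ≤ codimContent μ δ (s ∪ t) := by
  refine le_of_forall_gt fun b hb => ?_
  obtain ⟨c, r, hr, hcov, hlt⟩ := exists_cover_of_codimContent_lt hb
  refine lt_of_le_of_lt ?_ hlt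
  have hdisj : Disjoint {i | (ball (c i) (r i) ∩ s).Nonempty}
      {i | (ball (c i) (r i) ∩ t).Nonempty} := by
    refine disjoint_left.2 ?_
    rintro i ⟨x, hx, hxs⟩ ⟨y, hy, hyt⟩
    linarith [hst x hxs y hyt, dist_triangle_right x y (c i), mem_ball.1 hx, mem_ball.1 hy, hr i]
  refine (add_le_add (codimContent_le_tsum_indicator μ hδ hr (subset_union_left.trans hcov))
    (codimContent_le_tsum_indicator μ hδ hr (subset_union_right.trans hcov))).trans ?_
  rw [← ENNReal.tsum_add]
  refine ENNReal.tsum_le_tsum fun i => ?_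
  have hunion := congrFun (indicator_union_of_disjoint hdisj
    fun i => μ (ball (c i) (r i)) / ENNReal.ofReal (r i)) i
  exact hunion.ge.trans (indicator_le_self _ _ i)

lemma codimH_mono {A B : Set T} (h : A ⊆ B) : codimH μ A ≤ codimH μ B :=
  iSup₂_mono fun δ _ => codimContent_mono μ δ h

/-- `codimH` as an outer measure. On the empty space there is no ball at all, so that
`codimH μ ∅ = ⊤`. -/
def codimOuter [Nonempty T] : OuterMeasure T where
  measureOf := codimH μ
  empty := le_antisymm (iSup₂_le fun δ hδ => (codimContent_le (c := fun _ => Classical.arbitrary T)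
    (r := fun _ => 0) (fun _ => hδ.le) (empty_subset _)).trans (by simp)) zero_le
  mono := codimH_mono μ
  iUnion_nat := fun s _ => iSup₂_le fun δ hδ => (codimContent_iUnion_le μ δ s).trans
    (ENNReal.tsum_le_tsum fun _ => codimContent_le_codimH μ hδ _)

lemma codimOuter_isMetric [Nonempty T] : (codimOuter μ).IsMetric := by
  rintro s t ⟨r₀, hr₀, hsep⟩
  refine le_antisymm (measure_union_le _ _) ?_
  change codimH μ s + codimH μ t ≤ codimH μ (s ∪ t)
  obtain ⟨q, hq0, hq⟩ := ENNReal.lt_iff_exists_nnreal_btwn.1 (pos_iff_ne_zero.2 hr₀)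
  have hq0 : 0 < (q : ℝ) := mod_cast hq0
  have hdist : ∀ x ∈ s, ∀ y ∈ t, (q : ℝ) ≤ dist x y := fun x hx y hy => by
    have := hq.le.trans (hsep x hx y hy)
    rwa [edist_nndist, ENNReal.coe_le_coe, ← NNReal.coe_le_coe, coe_nndist] at this
  rw [codimH_eq_iSup_codimContent μ s, codimH_eq_iSup_codimContent μ t]
  refine ENNReal.biSup_add_biSup_le' ⟨1, one_pos⟩ ⟨1, one_pos⟩ fun δ₁ h₁ δ₂ h₂ => ?_
  set δ := min (min δ₁ δ₂) (q / 2)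
  have hδ : 0 < δ := lt_min (lt_min h₁ h₂) (by positivity)
  have hδq : 2 * δ ≤ q := by linarith [min_le_right (min δ₁ δ₂) ((q : ℝ) / 2)]
  calc codimContent μ δ₁ s + codimContent μ δ₂ t
      ≤ codimContent μ δ s + codimContent μ δ t := add_le_add
        (codimContent_anti μ ((min_le_left _ _).trans (min_le_left _ _)) _)
        (codimContent_anti μ ((min_le_left _ _).trans (min_le_right _ _)) _)
    _ ≤ codimContent μ δ (s ∪ t) :=
        codimContent_add_le_of_le_dist μ hδ.le fun x hx y hy => hδq.trans (hdist x hx y hy)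
    _ ≤ codimH μ (s ∪ t) := codimContent_le_codimH μ hδ _

/-- `codimH` as a Borel measure. -/
def codimMeasure [Nonempty T] [BorelSpace T] : Measure T :=
  (codimOuter μ).toMeasure
    (BorelSpace.measurable_eq (α := T) |>.le.trans (codimOuter_isMetric μ).borel_le_caratheodory)

lemma codimMeasure_apply [Nonempty T] [BorelSpace T] {A : Set T} (hA : MeasurableSet A) :
    codimMeasure μ A = codimH μ A :=
  toMeasure_apply _ _ hA

/-- The measure `H⌞S`, where `H` is the codimension 1 Hausdorff measure of `μ`. -/
def surfaceMeasure [Nonempty T] [BorelSpace T] (S : Set T) : Measure T :=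
  (codimMeasure μ).restrict S

lemma surfaceMeasure_apply [Nonempty T] [BorelSpace T] {S A : Set T} (hS : MeasurableSet S)
    (hA : MeasurableSet A) : surfaceMeasure μ S A = codimH μ (S ∩ A) := by
  rw [surfaceMeasure, Measure.restrict_apply hA, inter_comm, codimMeasure_apply μ (hS.inter hA)]

variable {μ} in
lemma isFiniteMeasure_surfaceMeasure [Nonempty T] [BorelSpace T] {S : Set T}
    (hS : MeasurableSet S) (hfin : codimH μ S < ⊤) : IsFiniteMeasure (surfaceMeasure μ S) :=
  ⟨by rwa [surfaceMeasure_apply μ hS .univ, inter_univ]⟩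

end Hausdorff

lemma volume_Ioi_ofReal_lt (a : ℝ≥0∞) :
    volume.restrict (Ioi (0 : ℝ)) {t | ENNReal.ofReal t < a} = a := by
  rw [Measure.restrict_apply (measurableSet_lt ENNReal.measurable_ofReal measurable_const)]
  rcases eq_or_ne a ⊤ with rfl | ha
  · simp
  have hIoo : {t : ℝ | ENNReal.ofReal t < a} ∩ Ioi 0 = Ioo 0 a.toReal := by
    ext t
    rw [inter_comm]
    exact and_congr_right fun ht => ENNReal.ofReal_lt_iff_lt_toReal (le_of_lt ht) ha
  rw [hIoo, Real.volume_Ioo, sub_zero, ENNReal.ofReal_toReal ha]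

lemma lintegral_eq_lintegral_meas_ofReal_lt {α : Type*} [MeasurableSpace α] (ν : Measure α)
    [SFinite ν] {g : α → ℝ≥0∞} (hg : Measurable g) :
    ∫⁻ x, g x ∂ν = ∫⁻ t in Ioi (0 : ℝ), ν {x | ENNReal.ofReal t < g x} := by
  have hm : MeasurableSet {q : α × ℝ | ENNReal.ofReal q.2 < g q.1} :=
    measurableSet_lt (ENNReal.measurable_ofReal.comp measurable_snd) (hg.comp measurable_fst)
  calc ∫⁻ x, g x ∂ν
      = ∫⁻ x, volume.restrict (Ioi (0 : ℝ)) {t | ENNReal.ofReal t < g x} ∂ν :=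
        lintegral_congr fun x => (volume_Ioi_ofReal_lt (g x)).symm
    _ = (ν.prod (volume.restrict (Ioi (0 : ℝ)))) {q | ENNReal.ofReal q.2 < g q.1} :=
        (Measure.prod_apply hm).symm
    _ = ∫⁻ t in Ioi (0 : ℝ), ν {x | ENNReal.ofReal t < g x} := Measure.prod_apply_symm hm

lemma choquetIntegral_eq_lintegral {T : Type*} [MetricSpace T] [MeasurableSpace T]
    [BorelSpace T] [Nonempty T] (μ : Measure T) {S : Set T} (hS : MeasurableSet S)
    (hfin : codimH μ S < ⊤) {g : T → ℝ≥0∞} (hg : Measurable g) :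
    choquetIntegral μ S g = ∫⁻ x, g x ∂surfaceMeasure μ S := by
  have := isFiniteMeasure_surfaceMeasure hS hfin
  rw [lintegral_eq_lintegral_meas_ofReal_lt _ hg]
  exact lintegral_congr fun t =>
    (surfaceMeasure_apply μ hS (measurableSet_lt measurable_const hg)).symm

/-! ### Doubling and the Poincaré inequality at small scales -/

section Doubling

variable {T : Type*} [MetricSpace T] [MeasurableSpace T] {μ : Measure T} {c : ℝ≥0} {CP lP : ℝ}

lemma IsDoubling.measure_ball_two_pow_mul_le (hD : IsDoubling μ c) (n : ℕ) (x : T) {r : ℝ}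
    (hr : 0 < r) (hn : 2 ^ n * r ≤ diam (univ : Set T)) :
    μ (ball x (2 ^ n * r)) ≤ (c : ℝ≥0∞) ^ n * μ (ball x r) := by
  induction n with
  | zero => simp
  | succ n ih =>
    have hpos : 0 < 2 ^ n * r := by positivity
    have hlt : 2 ^ n * r < diam (univ : Set T) := by rw [pow_succ] at hn; linarith
    calc μ (ball x (2 ^ (n + 1) * r)) = μ (ball x (2 * (2 ^ n * r))) := by
          rw [pow_succ', mul_assoc]
      _ ≤ c * μ (ball x (2 ^ n * r)) := (hD x (2 ^ n * r) hpos hlt).2.1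
      _ ≤ c * ((c : ℝ≥0∞) ^ n * μ (ball x r)) := by gcongr; exact ih hlt.le
      _ = (c : ℝ≥0∞) ^ (n + 1) * μ (ball x r) := by rw [pow_succ', mul_assoc]

lemma IsDoubling.measure_le_of_subset_ball (hD : IsDoubling μ c) (n : ℕ) {x : T} {r : ℝ}
    {A : Set T} (hr : 0 < r) (hn : 2 ^ n * r ≤ diam (univ : Set T))
    (hA : A ⊆ ball x (2 ^ n * r)) : μ A ≤ (c : ℝ≥0∞) ^ n * μ (ball x r) :=
  (measure_mono hA).trans (hD.measure_ball_two_pow_mul_le n x hr hn)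

lemma SupportsPoincare.isFiniteMeasure [CompactSpace T] (hP : SupportsPoincare μ CP lP) :
    IsFiniteMeasure μ := by
  rcases isEmpty_or_nonempty T with h | ⟨⟨x⟩⟩
  · exact ⟨by simp [Set.eq_empty_of_isEmpty (univ : Set T)]⟩
  · obtain ⟨r, hr, hsub⟩ := isCompact_univ.isBounded.subset_ball_lt 0 x
    exact ⟨(measure_mono hsub).trans_lt (hP.1 x r hr).2⟩

lemma SupportsPoincare.isOpenPosMeasure (hP : SupportsPoincare μ CP lP) :
    μ.IsOpenPosMeasure where
  open_pos U hU := by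
    rintro ⟨x, hx⟩
    obtain ⟨r, hr, hsub⟩ := Metric.isOpen_iff.1 hU x hx
    exact ((hP.1 x r hr).1.trans_le (measure_mono hsub)).ne'

/-- The weak `1`-Poincaré inequality `∫_{B(x,r)} |u - u_B| ≤ K r ∫_{B(x,Λr)} ρ`, at the scales
`r ≤ R₀` only. Compared to `SupportsPoincare`, the quotients by the measures of the balls have been
removed at the cost of a power of the doubling constant. -/
def LocalPoincare (μ : Measure T) (K : ℝ≥0) (Λ R₀ : ℝ) : Prop :=
  ∀ (u : T → ℝ) (ρ : T → ℝ≥0∞), LocallyIntegrable u μ → Measurable ρ → IsUpperGradient u ρ →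
    ∀ (x : T) (r : ℝ), 0 < r → r ≤ R₀ →
      ∫⁻ y in ball x r, ‖u y - ⨍ z in ball x r, u z ∂μ‖ₑ ∂μ ≤
        K * ENNReal.ofReal r * ∫⁻ y in ball x (Λ * r), ρ y ∂μ

lemma SupportsPoincare.localPoincare (hP : SupportsPoincare μ CP lP) (hD : IsDoubling μ c)
    {m : ℕ} (hm : 0 < lP → 1 ≤ 2 ^ m * lP) :
    LocalPoincare μ ((2 * |CP|).toNNReal * c ^ m) (max lP 1)
      (diam (univ : Set T) / (2 ^ m * max lP 1)) := by
  intro u ρ hu hρ hg x r hr hrR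
  obtain ⟨hpos, hfin⟩ := hP.1 x r hr
  have hmean := (ENNReal.div_le_iff hpos.ne' hfin.ne).1 (hP.2 u ρ hu hρ hg x r hr)
  simp only [← Real.enorm_eq_ofReal_abs] at hmean
  have hdiam : ENNReal.ofReal (CP * diam (ball x r)) ≤
      ENNReal.ofReal (2 * |CP|) * ENNReal.ofReal r := by
    rw [← ENNReal.ofReal_mul (by positivity), mul_assoc, mul_left_comm]
    exact ENNReal.ofReal_le_ofReal <|
      mul_le_mul (le_abs_self CP) (diam_ball hr.le) diam_nonneg (abs_nonneg CP)
  have hball : (∫⁻ y in ball x (lP * r), ρ y ∂μ) / μ (ball x (lP * r)) * μ (ball x r) ≤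
      (c : ℝ≥0∞) ^ m * ∫⁻ y in ball x (max lP 1 * r), ρ y ∂μ := by
    rcases le_or_gt lP 0 with hl | hl
    · simp [ball_eq_empty.2 (mul_nonpos_of_nonpos_of_nonneg hl hr.le)]
    have hlr : 0 < lP * r := by positivity
    obtain ⟨hpos', hfin'⟩ := hP.1 x (lP * r) hlr
    have hscale : 2 ^ m * (lP * r) ≤ diam (univ : Set T) := by
      rw [le_div_iff₀ (by positivity)] at hrR
      refine le_trans ?_ hrR
      rw [mul_comm r, mul_assoc]
      gcongr
      exact le_max_left _ _
    have hdouble : μ (ball x r) ≤ (c : ℝ≥0∞) ^ m * μ (ball x (lP * r)) :=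
      hD.measure_le_of_subset_ball m hlr hscale
        (ball_subset_ball (by nlinarith [mul_le_mul_of_nonneg_right (hm hl) hr.le]))
    calc (∫⁻ y in ball x (lP * r), ρ y ∂μ) / μ (ball x (lP * r)) * μ (ball x r)
        ≤ (∫⁻ y in ball x (lP * r), ρ y ∂μ) / μ (ball x (lP * r)) *
          ((c : ℝ≥0∞) ^ m * μ (ball x (lP * r))) := by gcongr
      _ = (c : ℝ≥0∞) ^ m * ∫⁻ y in ball x (lP * r), ρ y ∂μ := by
          rw [mul_left_comm, ENNReal.div_mul_cancel hpos'.ne' hfin'.ne]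
      _ ≤ (c : ℝ≥0∞) ^ m * ∫⁻ y in ball x (max lP 1 * r), ρ y ∂μ := by
          gcongr
          exact le_max_left _ _
  refine hmean.trans ?_
  rw [mul_assoc]
  refine (mul_le_mul' hdiam hball).trans_eq ?_
  simp only [ENNReal.coe_mul, ENNReal.coe_pow, ENNReal.ofReal]
  ring

end Doubling

lemma enorm_setAverage_sub_mul_le {α : Type*} [MeasurableSpace α] {ν : Measure α} {s : Set α}
    (hs : ν s ≠ ⊤) {u : α → ℝ} (hu : IntegrableOn u s ν) (a : ℝ) :
    ‖(⨍ x in s, u x ∂ν) - a‖ₑ * ν s ≤ ∫⁻ x in s, ‖u x - a‖ₑ ∂ν := by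
  have hmean : ∫ x in s, (u x - a) ∂ν = ν.real s * ((⨍ x in s, u x ∂ν) - a) := by
    rw [integral_sub hu (integrableOn_const hs), ← measure_smul_setAverage _ hs]
    simp [mul_sub]
  calc ‖(⨍ x in s, u x ∂ν) - a‖ₑ * ν s = ‖∫ x in s, (u x - a) ∂ν‖ₑ := by
        rw [hmean, enorm_mul, Real.enorm_of_nonneg measureReal_nonneg, ofReal_measureReal hs,
          mul_comm]
    _ ≤ ∫⁻ x in s, ‖u x - a‖ₑ ∂ν := enorm_integral_le_lintegral_enorm _

lemma tendsto_setAverage_ball {X : Type*} [PseudoMetricSpace X] [MeasurableSpace X]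
    [OpensMeasurableSpace X] {μ : Measure X} [IsFiniteMeasure μ] [μ.IsOpenPosMeasure]
    {u : X → ℝ} (hu : Integrable u μ)
    {x : X} (hx : ContinuousAt u x) :
    Tendsto (fun r => ⨍ z in ball x r, u z ∂μ) (𝓝[>] 0) (𝓝 (u x)) := by
  refine Metric.nhds_basis_closedBall.tendsto_right_iff.2 fun ε hε => ?_
  obtain ⟨δ, hδ, hball⟩ := Metric.eventually_nhds_iff_ball.1 (hx (closedBall_mem_nhds _ hε))
  filter_upwards [Ioo_mem_nhdsGT hδ] with r hr
  refine (convex_closedBall (u x) ε).set_average_mem isClosed_closedBall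
    (measure_ball_pos μ x hr.1).ne' (measure_ne_top _ _) ?_ hu.integrableOn
  exact ae_restrict_of_forall_mem measurableSet_ball
    fun z hz => hball z (ball_subset_ball hr.2.le hz)

section UpperGradientOne

variable {T : Type*} [MetricSpace T] [MeasurableSpace T] {μ : Measure T} [IsFiniteMeasure μ]
  [μ.IsOpenPosMeasure] {c K : ℝ≥0} {Λ R₀ : ℝ} {N : ℕ} {u : T → ℝ}

lemma dist_setAverage_ball_half_le (hD : IsDoubling μ c) (hP : LocalPoincare μ K Λ R₀)
    (hN : 2 * Λ + 1 ≤ 2 ^ N) (hu : Integrable u μ) (hug : IsUpperGradient u fun _ => 1)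
    {x y : T} {r : ℝ} (hr : 0 < r) (hrR : r ≤ R₀) (hrd : 2 ^ N * r ≤ diam (univ : Set T))
    (hxy : dist x y ≤ r / 2) :
    dist (⨍ z in ball x r, u z ∂μ) (⨍ z in ball y (r / 2), u z ∂μ) ≤ K * c ^ N * r := by
  have hsub : ball y (r / 2) ⊆ ball x r := ball_subset_ball' (by rw [dist_comm]; linarith)
  have hdouble : μ (ball x (Λ * r)) ≤ (c : ℝ≥0∞) ^ N * μ (ball y (r / 2)) :=
    hD.measure_le_of_subset_ball N (half_pos hr)
      (le_trans (by gcongr; exact half_le_self hr.le) hrd) (ball_subset_ball' (by nlinarith))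
  have hmul : ‖(⨍ z in ball y (r / 2), u z ∂μ) - ⨍ z in ball x r, u z ∂μ‖ₑ * μ (ball y (r / 2)) ≤
      ENNReal.ofReal (K * c ^ N * r) * μ (ball y (r / 2)) := calc
    _ ≤ ∫⁻ z in ball y (r / 2), ‖u z - ⨍ w in ball x r, u w ∂μ‖ₑ ∂μ :=
        enorm_setAverage_sub_mul_le (measure_ne_top _ _) hu.integrableOn _
    _ ≤ ∫⁻ z in ball x r, ‖u z - ⨍ w in ball x r, u w ∂μ‖ₑ ∂μ := lintegral_mono_set hsub
    _ ≤ K * ENNReal.ofReal r * ∫⁻ _ in ball x (Λ * r), 1 ∂μ :=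
        hP u _ hu.locallyIntegrable measurable_const hug x r hr hrR
    _ ≤ K * ENNReal.ofReal r * ((c : ℝ≥0∞) ^ N * μ (ball y (r / 2))) := by
        rw [setLIntegral_one]
        gcongr
    _ = ENNReal.ofReal (K * c ^ N * r) * μ (ball y (r / 2)) := by
        rw [ENNReal.ofReal_mul (by positivity), ← NNReal.coe_pow, ← NNReal.coe_mul,
          ENNReal.ofReal_coe_nnreal, ENNReal.coe_mul, ENNReal.coe_pow]
        ring
  rw [ENNReal.mul_le_mul_iff_left (measure_ball_pos μ y (half_pos hr)).ne' (measure_ne_top _ _),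
    ← edist_eq_enorm_sub, edist_dist, ENNReal.ofReal_le_ofReal_iff (by positivity)] at hmul
  rwa [dist_comm]

variable [OpensMeasurableSpace T]

lemma dist_setAverage_ball_apply_le (hD : IsDoubling μ c) (hP : LocalPoincare μ K Λ R₀)
    (hN : 2 * Λ + 1 ≤ 2 ^ N) (hu : Integrable u μ) (huc : Continuous u)
    (hug : IsUpperGradient u fun _ => 1) (x : T) {r : ℝ} (hr : 0 < r) (hrR : r ≤ R₀)
    (hrd : 2 ^ N * r ≤ diam (univ : Set T)) :
    dist (⨍ z in ball x r, u z ∂μ) (u x) ≤ 2 * (K * c ^ N * r) := by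
  have hpos : ∀ n : ℕ, 0 < r / 2 ^ n := fun n => by positivity
  have hle : ∀ n : ℕ, r / 2 ^ n ≤ r := fun n => div_le_self hr.le (one_le_pow₀ one_le_two)
  have hscale : Tendsto (fun n : ℕ => r / 2 ^ n) atTop (𝓝[>] 0) :=
    tendsto_nhdsWithin_iff.2 ⟨tendsto_const_nhds.div_atTop
      (tendsto_pow_atTop_atTop_of_one_lt one_lt_two), Eventually.of_forall hpos⟩
  have hstep : ∀ n : ℕ, dist (⨍ z in ball x (r / 2 ^ n), u z ∂μ)
      (⨍ z in ball x (r / 2 ^ (n + 1)), u z ∂μ) ≤ 2 * (K * c ^ N * r) / 2 / 2 ^ n := fun n => by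
    have h := dist_setAverage_ball_half_le hD hP hN hu hug (x := x) (y := x) (hpos n)
      ((hle n).trans hrR) (le_trans (by gcongr; exact hle n) hrd)
      (by rw [dist_self]; exact (half_pos (hpos n)).le)
    rw [div_div, ← pow_succ] at h
    exact h.trans_eq (by ring)
  simpa only [pow_zero, div_one] using dist_le_of_le_geometric_two_of_tendsto₀ hstep
    ((tendsto_setAverage_ball hu huc.continuousAt).comp hscale)

theorem dist_le_of_isUpperGradient_one (hD : IsDoubling μ c) (hP : LocalPoincare μ K Λ R₀)
    (hN : 2 * Λ + 1 ≤ 2 ^ N) (hu : Integrable u μ) (huc : Continuous u)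
    (hug : IsUpperGradient u fun _ => 1) {x y : T} {r : ℝ} (hr : 0 < r) (hrR : 2 * r ≤ R₀)
    (hrd : 2 ^ N * (2 * r) ≤ diam (univ : Set T)) (hxy : dist x y ≤ r) :
    dist (u x) (u y) ≤ 8 * (K * c ^ N) * r := by
  have hx := dist_setAverage_ball_apply_le hD hP hN hu huc hug x (r := 2 * r) (by positivity)
    hrR hrd
  have hy := dist_setAverage_ball_apply_le hD hP hN hu huc hug y hr (by linarith)
    (le_trans (by gcongr; linarith) hrd)
  have hxy := dist_setAverage_ball_half_le hD hP hN hu hug (x := x) (y := y) (r := 2 * r)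
    (by positivity) hrR hrd (by linarith)
  rw [mul_div_cancel_left₀ _ (two_ne_zero' ℝ)] at hxy
  linarith [dist_triangle_left (u x) (u y) (⨍ z in ball x (2 * r), u z ∂μ),
    dist_triangle (⨍ z in ball x (2 * r), u z ∂μ) (⨍ z in ball y r, u z ∂μ) (u y)]

end UpperGradientOne

/-! ### Chains and local path connectedness -/

section Chains

variable {T : Type*} [MetricSpace T] {ε L L' : ℝ} {x y z : T}

/-- `y` can be reached from `x` along a (discontinuous) curve which is parametrized by arclength on
`[0, L]` up to an additive error `ε`. -/
def ChainReach (ε : ℝ) (x : T) (L : ℝ) (y : T) : Prop :=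
  0 ≤ L ∧ ∃ f : ℝ → T, f 0 = x ∧ f L = y ∧
    ∀ s ∈ Icc 0 L, ∀ t ∈ Icc 0 L, s ≤ t → dist (f s) (f t) ≤ t - s + ε

lemma ChainReach.refl (hε : 0 ≤ ε) (x : T) : ChainReach ε x 0 x :=
  ⟨le_rfl, fun _ => x, rfl, rfl, fun s _ t _ hst => by
    rw [dist_self]; linarith⟩

/-- Follow the chain, wait at `y`, and jump to `z` at the last moment. -/
lemma ChainReach.step (h : ChainReach ε x L y) (hyz : dist y z ≤ ε) (hL : L + dist y z ≤ L') :
    ChainReach ε x L' z := by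
  obtain ⟨hL0, f, hf0, hfL, hf⟩ := h
  have hd := dist_nonneg (x := y) (y := z)
  rcases (show L ≤ L' by linarith).eq_or_lt with rfl | hlt
  · exact ⟨hL0, f, hf0, by rw [hfL, ← dist_le_zero]; linarith, hf⟩
  refine ⟨by linarith, fun t => if t < L' then f (min t L) else z, ?_, by simp, ?_⟩
  · simp [hL0.trans_lt hlt, hL0, hf0]
  intro s hs t ht hst
  have hmem : ∀ r ∈ Icc 0 L', min r L ∈ Icc 0 L := fun r hr =>
    ⟨le_min hr.1 hL0, min_le_right _ _⟩
  rcases ht.2.lt_or_eq with htL | rfl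
  · simp only [htL, hst.trans_lt htL, if_true]
    refine (hf _ (hmem s hs) _ (hmem t ht) (min_le_min_right L hst)).trans ?_
    rcases le_total s L with h | h <;> rcases le_total t L with h' | h' <;> (simp [*]; try linarith)
  rcases hs.2.lt_or_eq with hsL | rfl
  · simp only [hsL, lt_irrefl, if_true, if_false]
    rcases le_total s L with h | h
    · rw [min_eq_left h]
      have hsy := hf s ⟨hs.1, h⟩ L ⟨hL0, le_rfl⟩ h
      rw [hfL] at hsy
      linarith [dist_triangle (f s) y z]
    · rw [min_eq_right h, hfL]
      linarith
  · simp only [lt_irrefl, if_false, dist_self]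
    linarith

lemma exists_chainReach [PreconnectedSpace T] (hε : 0 < ε) (x y : T) :
    ∃ L, ChainReach ε x L y := by
  have hstep : ∀ y z, dist y z < ε → (∃ L, ChainReach ε x L y) → ∃ L, ChainReach ε x L z :=
    fun y z h ⟨L, hL⟩ => ⟨L + dist y z, hL.step h.le le_rfl⟩
  have hclopen : IsClopen {y : T | ∃ L, ChainReach ε x L y} := by
    refine ⟨isOpen_compl_iff.1 ?_, ?_⟩ <;> refine Metric.isOpen_iff.2 fun y hy => ⟨ε, hε, ?_⟩
    · exact fun z hz hz' => hy (hstep z y hz hz')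
    · exact fun z hz => hstep y z (mem_ball'.1 hz) hy
  exact eq_univ_iff_forall.1 (hclopen.eq_univ ⟨x, 0, ChainReach.refl hε.le x⟩) y

/-- The least length of an `ε`-chain from `x` to `y`. -/
def chainDist (ε : ℝ) (x y : T) : ℝ := sInf {L | ChainReach ε x L y}

lemma chainDist_le (h : ChainReach ε x L y) : chainDist ε x y ≤ L :=
  csInf_le ⟨0, fun _ hL => hL.1⟩ h

section Preconnected

variable [PreconnectedSpace T]

lemma chainDist_le_add (hε : 0 < ε) (h : dist y z ≤ ε) :
    chainDist ε x z ≤ chainDist ε x y + dist y z := by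
  rw [← sub_le_iff_le_add]
  refine le_csInf (exists_chainReach hε x y) fun L hL => ?_
  rw [sub_le_iff_le_add]
  exact chainDist_le (ChainReach.step hL h le_rfl)

lemma eventually_edist_chainDist_le (hε : 0 < ε) (x y : T) :
    ∀ᶠ z in 𝓝 y, edist (chainDist ε x z) (chainDist ε x y) ≤ 1 * edist z y := by
  filter_upwards [closedBall_mem_nhds y hε] with z hz
  rw [one_mul, edist_dist, edist_dist, Real.dist_eq]
  refine ENNReal.ofReal_le_ofReal (abs_sub_le_iff.2 ⟨?_, ?_⟩)
  · rw [dist_comm]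
    linarith [chainDist_le_add (x := x) hε (mem_closedBall'.1 hz)]
  · linarith [chainDist_le_add (x := x) hε (mem_closedBall.1 hz)]

lemma isUpperGradient_chainDist (hε : 0 < ε) (x : T) :
    IsUpperGradient (chainDist ε x) fun _ => 1 :=
  isUpperGradient_of_eventually_edist_le (M := 1) (fun _ => le_rfl)
    (eventually_edist_chainDist_le hε x)

lemma continuous_chainDist (hε : 0 < ε) (x : T) : Continuous (chainDist ε x) :=
  continuous_of_eventually_edist_le ENNReal.one_ne_top (eventually_edist_chainDist_le hε x)

end Preconnected

lemma exists_lipschitzOnWith_of_forall_chainReach [CompactSpace T]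
    (h : ∀ ε > 0, ChainReach ε x L y) :
    ∃ f : ℝ → T, f 0 = x ∧ f L = y ∧ LipschitzOnWith 1 f (Icc 0 L) := by
  choose f hf0 hfL hf using fun n : ℕ => (h (1 / ((n : ℝ) + 1)) (by positivity)).2
  have hlim : ∀ t, ∃ w, Tendsto (fun n => f n t) (hyperfilter ℕ) (𝓝 w) := fun t => by
    obtain ⟨w, -, hw⟩ := isCompact_univ.ultrafilter_le_nhds ((hyperfilter ℕ).map fun n => f n t)
      (by simp)
    exact ⟨w, hw⟩
  choose g hg using hlim
  have hle : ∀ s ∈ Icc 0 L, ∀ t ∈ Icc 0 L, s ≤ t → dist (g s) (g t) ≤ t - s := by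
    intro s hs t ht hst
    have herr : Tendsto (fun n : ℕ => t - s + 1 / ((n : ℝ) + 1)) (hyperfilter ℕ)
        (𝓝 (t - s + 0)) :=
      (tendsto_const_nhds.add tendsto_one_div_add_atTop_nhds_zero_nat).mono_left
        Nat.hyperfilter_le_atTop
    rw [add_zero] at herr
    exact le_of_tendsto_of_tendsto' ((hg s).dist (hg t)) herr fun n => hf n s hs t ht hst
  refine ⟨g, tendsto_nhds_unique (hg 0) (by simp only [hf0, tendsto_const_nhds]),
    tendsto_nhds_unique (hg L) (by simp only [hfL, tendsto_const_nhds]),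
    LipschitzOnWith.of_dist_le_mul fun s hs t ht => ?_⟩
  rw [NNReal.coe_one, one_mul, Real.dist_eq]
  rcases le_total s t with hst | hst
  · rw [abs_sub_comm, abs_of_nonneg (sub_nonneg.2 hst)]
    exact hle s hs t ht hst
  · rw [dist_comm, abs_of_nonneg (sub_nonneg.2 hst)]
    exact hle t ht s hs hst

end Chains

lemma joinedIn_closedBall_of_lipschitzOnWith {T : Type*} [PseudoMetricSpace T] {f : ℝ → T} {L : ℝ}
    (hL : 0 ≤ L) (hf : LipschitzOnWith 1 f (Icc 0 L)) :
    JoinedIn (closedBall (f 0) L) (f 0) (f L) := by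
  let γ : UPath T := ⟨0, L, hL, f, hf⟩
  refine ⟨γ.toPath, fun t => ?_⟩
  have hmem : 0 + (t : ℝ) * (L - 0) ∈ Icc 0 L :=
    ⟨by have := t.2.1; nlinarith, by have := t.2.2; nlinarith⟩
  have hdist := hf.dist_le_mul _ hmem 0 ⟨le_rfl, hL⟩
  rw [NNReal.coe_one, one_mul, Real.dist_0_eq_abs, abs_of_nonneg hmem.1] at hdist
  exact hdist.trans hmem.2

section LocallyPathConnected

variable {T : Type*} [MetricSpace T] [MeasurableSpace T] [BorelSpace T] [CompactSpace T]
  [PreconnectedSpace T] {μ : Measure T} [IsFiniteMeasure μ] [μ.IsOpenPosMeasure]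
  {c K : ℝ≥0} {Λ R₀ : ℝ}

/-- The Poincaré inequality makes the chain distance Lipschitz uniformly in `ε`. -/
lemma joinedIn_closedBall_of_localPoincare (hD : IsDoubling μ c) (hP : LocalPoincare μ K Λ R₀)
    {N : ℕ} (hN : 2 * Λ + 1 ≤ 2 ^ N) {x y : T} {r : ℝ} (hr : 0 < r) (hrR : 2 * r ≤ R₀)
    (hrd : 2 ^ N * (2 * r) ≤ diam (univ : Set T)) (hxy : dist x y ≤ r) :
    JoinedIn (closedBall x ((8 * (K * c ^ N) + 1) * r)) x y := by
  have hchain : ∀ ε > 0, ChainReach ε x ((8 * (K * c ^ N) + 1) * r) y := by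
    intro ε hε
    have hcont := continuous_chainDist hε x
    have hlip := dist_le_of_isUpperGradient_one hD hP hN
      (hcont.integrable_of_hasCompactSupport (HasCompactSupport.of_compactSpace _)) hcont
      (isUpperGradient_chainDist hε x) hr hrR hrd hxy
    have hself : chainDist ε x x ≤ 0 := chainDist_le (ChainReach.refl hε.le x)
    rw [Real.dist_eq] at hlip
    obtain ⟨L, hL, hlt⟩ := exists_lt_of_csInf_lt (exists_chainReach hε x y)
      (show chainDist ε x y < (8 * (K * c ^ N) + 1) * r by linarith [(abs_le.1 hlip).1])
    exact ChainReach.step hL (by simpa using hε.le) (by simpa using hlt.le)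
  obtain ⟨f, rfl, rfl, hf⟩ := exists_lipschitzOnWith_of_forall_chainReach hchain
  exact joinedIn_closedBall_of_lipschitzOnWith (by positivity) hf

theorem locallyPathConnectedSpace_of_localPoincare [Nontrivial T] (hD : IsDoubling μ c)
    (hP : LocalPoincare μ K Λ R₀) (hR₀ : 0 < R₀) : LocallyPathConnectedSpace T := by
  have hd : 0 < diam (univ : Set T) := diam_pos nontrivial_univ isCompact_univ.isBounded
  obtain ⟨N, hN⟩ := pow_unbounded_of_one_lt (2 * Λ + 1) one_lt_two
  rw [locallyPathConnectedSpace_iff_pathComponentIn_mem_nhds]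
  intro x U hU hxU
  obtain ⟨ε, hε, hεU⟩ := Metric.isOpen_iff.1 hU x hxU
  have hevent : ∀ᶠ r : ℝ in 𝓝[>] 0, 2 * r ≤ R₀ ∧ 2 ^ N * (2 * r) ≤ diam (univ : Set T) ∧
      (8 * (K * c ^ N) + 1) * r < ε := by
    have hlim : ∀ a : ℝ, Tendsto (fun r => a * r) (𝓝[>] 0) (𝓝 0) := fun a =>
      tendsto_nhdsWithin_of_tendsto_nhds (by simpa using (continuous_const_mul a).tendsto 0)
    simp only [← mul_assoc]
    exact ((hlim _).eventually_le_const hR₀).and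
      (((hlim _).eventually_le_const hd).and ((hlim _).eventually_lt_const hε))
  obtain ⟨r, ⟨hrR, hrd, hrε⟩, hr⟩ := (hevent.and self_mem_nhdsWithin).exists
  refine mem_of_superset (ball_mem_nhds x hr) fun y hy => ?_
  exact (joinedIn_closedBall_of_localPoincare hD hP hN.le hr hrR hrd (mem_ball'.1 hy).le).mono
    ((closedBall_subset_ball hrε).trans hεU)

end LocallyPathConnected

/-! ### Lifting maps of degree one -/

section Lift

lemma locallyPathConnectedSpace_of_isLocalHomeomorph {X Y : Type*} [TopologicalSpace X]
    [TopologicalSpace Y] [LocallyPathConnectedSpace Y] {f : X → Y} (hf : IsLocalHomeomorph f) :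
    LocallyPathConnectedSpace X := by
  choose e he _ using hf
  let _ : ChartedSpace Y X :=
    { atlas := range e
      chartAt := e
      mem_chart_source := he
      chart_mem_atlas := fun x => mem_range_self x }
  exact ChartedSpace.locallyPathConnectedSpace Y X

/-- Both `ψ` and `t ↦ ψ 0 + k t` are lifts, and homotopic paths have lifts with equal endpoints. -/
lemma lift_apply_one_of_homotopic_stdLoop {y : UnitAddCircle} {γ : Path y y} {k : ℤ}
    (h : γ.Homotopic (stdLoop k y)) {ψ : C(I, ℝ)} (hψ : ∀ t, (ψ t : UnitAddCircle) = γ t) :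
    ψ 1 = ψ 0 + k := by
  have hcirc := AddCircle.isCoveringMap_coe (1 : ℝ)
  have hy : (ψ 0 : UnitAddCircle) = y := (hψ 0).trans γ.source
  have hγ0 : (γ : C(I, UnitAddCircle)) 0 = (ψ 0 : UnitAddCircle) := (hψ 0).symm
  have hk0 : (stdLoop k y : C(I, UnitAddCircle)) 0 = (ψ 0 : UnitAddCircle) :=
    (stdLoop k y).source.trans hy.symm
  have hlift : ψ = hcirc.liftPath γ (ψ 0) hγ0 :=
    (hcirc.eq_liftPath_iff' (γ_0 := hγ0)).2 ⟨funext hψ, rfl⟩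
  have hlift' : (⟨fun t : I => ψ 0 + k * (t : ℝ), by fun_prop⟩ : C(I, ℝ)) =
      hcirc.liftPath (stdLoop k y) (ψ 0) hk0 := by
    refine (hcirc.eq_liftPath_iff' (γ_0 := hk0)).2 ⟨funext fun t => ?_, by simp⟩
    change ((ψ 0 + k * (t : ℝ) : ℝ) : UnitAddCircle) = y + ((k * (t : ℝ) : ℝ) : UnitAddCircle)
    rw [AddCircle.coe_add, hy]
  have hend := hcirc.liftPath_apply_one_eq_of_homotopicRel h (ψ 0) hγ0 hk0
  simpa using (DFunLike.congr_fun hlift 1).trans (hend.trans (DFunLike.congr_fun hlift' 1).symm)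

theorem exists_lift_of_hasDegree_one {T Tt : Type*} [MetricSpace T] [MetricSpace Tt] {π : Tt → T}
    {τ : Tt → Tt} {x₀ : T} {α₀ : Path x₀ x₀} [LocallyPathConnectedSpace T] (hπ : CoverSetup π)
    (hτ : IsDeck π x₀ α₀ τ) {φ : T → UnitAddCircle} (hφ : HasDegree x₀ α₀ φ 1) :
    ∃ φt : C(Tt, ℝ), (∀ x, (φt x : UnitAddCircle) = φ (π x)) ∧ ∀ x, φt (τ x) = φt x + 1 := by
  obtain ⟨hcov, hsurj, -, hsc⟩ := hπ
  obtain ⟨hφc, hdeg⟩ := hφ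
  have : LocallyPathConnectedSpace Tt :=
    locallyPathConnectedSpace_of_isLocalHomeomorph hcov.isLocalHomeomorph
  have : PathConnectedSpace T := hsurj.pathConnectedSpace hcov.continuous
  obtain ⟨b, -⟩ := hsurj x₀
  obtain ⟨e₀, he₀⟩ := QuotientAddGroup.mk_surjective (φ (π b))
  obtain ⟨φt, ⟨-, hφt⟩, -⟩ :=
    (AddCircle.isCoveringMap_coe (1 : ℝ)).existsUnique_continuousMap_lifts
      (⟨fun x => φ (π x), hφc.comp hcov.continuous⟩ : C(Tt, UnitAddCircle)) b e₀ he₀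
  have hlift : ∀ x, (φt x : UnitAddCircle) = φ (π x) := congrFun hφt
  refine ⟨φt, hlift, fun x => ?_⟩
  let η : Path (π x) x₀ := PathConnectedSpace.somePath (π x) x₀
  let γ : Path (π x) (π x) := η.trans (α₀.trans η.symm)
  have hγ : IsDegreeOneLoop x₀ α₀ γ := ⟨η, .refl _⟩
  let γt := hcov.liftPath γ x γ.source
  have hγt : ∀ t, π (γt t) = γ t := congrFun (hcov.liftPath_lifts γ x γ.source)
  have hγ0 : γt 0 = x := hcov.liftPath_zero γ x γ.source
  have hγ1 : γt 1 = τ x := by rw [← hτ.2.2 (π x) γ hγ γt hγt, hγ0]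
  have hend := lift_apply_one_of_homotopic_stdLoop (hdeg (π x) γ hγ) (ψ := φt.comp γt) fun t => by
    rw [ContinuousMap.comp_apply, hlift, hγt]; rfl
  simpa [hγ0, hγ1] using hend

end Lift

lemma nontrivial_of_isGenerator {T : Type*} [TopologicalSpace T] {x₀ : T} {α₀ : Path x₀ x₀}
    (h : IsGenerator x₀ α₀) : Nontrivial T := by
  by_contra hT
  rw [not_nontrivial_iff_subsingleton] at hT
  have : Subsingleton (Path x₀ x₀) := ⟨fun _ _ => Path.ext (Subsingleton.elim _ _)⟩
  have hπ₁ : Subsingleton (Path.Homotopic.Quotient x₀ x₀) :=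
    inferInstanceAs (Subsingleton (Quotient _))
  exact zero_ne_one (h.1 (hπ₁.elim _ _ : _ = _) : (0 : ℤ) = 1)

/-! ### A relative isoperimetric inequality -/

section Cutoff

variable {T : Type*} [MetricSpace T] {ι : Type*} {F : Finset ι} {z : ι → T} {r : ι → ℝ}

/-- The cutoff function of a finite family of balls `B (z i) (r i)`, `i ∈ F`: it equals `1` on these
balls and vanishes outside the balls of twice the radius. -/
def cutoff (F : Finset ι) (z : ι → T) (r : ι → ℝ) (y : T) : ℝ :=
  min 1 (∑ i ∈ F, max 0 (2 - dist y (z i) / r i))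

/-- A bound for the pointwise Lipschitz constant of `cutoff`. The tripled balls leave room for the
bound to hold on a neighbourhood of each point. -/
def cutoffGrad (F : Finset ι) (z : ι → T) (r : ι → ℝ) (y : T) : ℝ≥0∞ :=
  ∑ i ∈ F, (ball (z i) (3 * r i)).indicator (fun _ => (ENNReal.ofReal (r i))⁻¹) y

lemma continuous_cutoff : Continuous (cutoff F z r) := by
  unfold cutoff; fun_prop

lemma cutoff_nonneg (y : T) : 0 ≤ cutoff F z r y :=
  le_min zero_le_one (Finset.sum_nonneg fun _ _ => le_max_left _ _)

lemma cutoff_le_one (y : T) : cutoff F z r y ≤ 1 := min_le_left _ _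

lemma abs_one_sub_cutoff_le (y : T) : |1 - cutoff F z r y| ≤ 1 := by
  rw [abs_of_nonneg (sub_nonneg.2 (cutoff_le_one y))]
  linarith [cutoff_nonneg (F := F) (z := z) (r := r) y]

lemma cutoff_eq_one {i : ι} (hi : i ∈ F) {y : T} (hy : y ∈ ball (z i) (r i)) :
    cutoff F z r y = 1 := by
  have hdiv : dist y (z i) / r i ≤ 1 := (div_le_one (pos_of_mem_ball hy)).2 (mem_ball.1 hy).le
  refine min_eq_left ((le_max_of_le_right ?_).trans
    (Finset.single_le_sum (f := fun i => max 0 (2 - dist y (z i) / r i))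
      (fun _ _ => le_max_left _ _) hi))
  linarith

lemma cutoff_eq_zero (hr : ∀ i ∈ F, 0 < r i) {y : T} (hy : ∀ i ∈ F, y ∉ ball (z i) (2 * r i)) :
    cutoff F z r y = 0 := by
  have hsum : ∑ i ∈ F, max 0 (2 - dist y (z i) / r i) = 0 :=
    Finset.sum_eq_zero fun i hi => max_eq_left <| by
      rw [sub_nonpos, le_div_iff₀ (hr i hi)]
      simpa only [mem_ball, not_lt] using hy i hi
  simp [cutoff, hsum]

lemma eventually_edist_max_two_sub_le (x y : T) {s : ℝ} (hs : 0 < s) :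
    ∀ᶠ y' in 𝓝 y, edist (max 0 (2 - dist y' x / s)) (max 0 (2 - dist y x / s)) ≤
      (ball x (3 * s)).indicator (fun _ => (ENNReal.ofReal s)⁻¹) y * edist y' y := by
  by_cases hy : y ∈ ball x (3 * s)
  · refine Eventually.of_forall fun y' => ?_
    rw [indicator_of_mem hy, ← ENNReal.ofReal_inv_of_pos hs, edist_dist, edist_dist,
      ← ENNReal.ofReal_mul (inv_pos.2 hs).le, Real.dist_eq]
    refine ENNReal.ofReal_le_ofReal ((abs_max_sub_max_le_max _ _ _ _).trans ?_)
    rw [sub_self, abs_zero, max_eq_right (abs_nonneg _), sub_sub_sub_cancel_left, ← sub_div,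
      abs_div, abs_of_pos hs, div_eq_inv_mul, dist_comm y' y]
    gcongr
    exact abs_dist_sub_le _ _ _
  · rw [mem_ball, not_lt] at hy
    filter_upwards [ball_mem_nhds y hs] with y' hy'
    have hvanish : ∀ v, 2 * s ≤ dist v x → max 0 (2 - dist v x / s) = 0 := fun v hv =>
      max_eq_left (by rwa [sub_nonpos, le_div_iff₀ hs])
    rw [hvanish y' (by linarith [dist_triangle_left y x y', mem_ball.1 hy']),
      hvanish y (by linarith), edist_self]
    exact zero_le

lemma eventually_edist_cutoff_le (hr : ∀ i ∈ F, 0 < r i) (y : T) :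
    ∀ᶠ y' in 𝓝 y, edist (cutoff F z r y') (cutoff F z r y) ≤ cutoffGrad F z r y * edist y' y := by
  filter_upwards [(Finset.eventually_all F).2 fun i hi =>
    eventually_edist_max_two_sub_le (z i) y (hr i hi)] with y' hy'
  refine (by simpa [cutoff] using LipschitzWith.id.const_min (1 : ℝ) _ _ :
    edist (cutoff F z r y') (cutoff F z r y) ≤ edist (∑ i ∈ F, max 0 (2 - dist y' (z i) / r i))
      (∑ i ∈ F, max 0 (2 - dist y (z i) / r i))).trans ?_
  simp only [edist_eq_enorm_sub, ← Finset.sum_sub_distrib, cutoffGrad, Finset.sum_mul] at hy' ⊢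
  exact (enorm_sum_le _ _).trans (Finset.sum_le_sum hy')

/-- Near a point where `W` jumps, `1 - cutoff` vanishes. -/
lemma eventually_edist_one_sub_cutoff_mul_le (hr : ∀ i ∈ F, 0 < r i) {W : T → ℝ}
    (hW : ∀ y, |W y| ≤ 1) {y : T}
    (hy : y ∈ ⋃ i ∈ F, ball (z i) (r i) ∨ ∀ᶠ y' in 𝓝 y, W y' = W y) :
    ∀ᶠ y' in 𝓝 y, edist ((1 - cutoff F z r y') * W y') ((1 - cutoff F z r y) * W y) ≤
      cutoffGrad F z r y * edist y' y := by
  rcases hy with hy | hy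
  · obtain ⟨i, hi, hyi⟩ := mem_iUnion₂.1 hy
    filter_upwards [isOpen_ball.mem_nhds hyi] with y' hy'
    simp [cutoff_eq_one hi hy', cutoff_eq_one hi hyi]
  · filter_upwards [hy, eventually_edist_cutoff_le (z := z) hr y] with y' hWy' hcut
    rw [hWy', edist_dist, Real.dist_eq, ← sub_mul, sub_sub_sub_cancel_left, abs_mul, abs_sub_comm]
    refine le_trans (ENNReal.ofReal_le_ofReal (mul_le_of_le_one_right (abs_nonneg _) (hW y))) ?_
    rwa [← Real.dist_eq, ← edist_dist]

lemma exists_forall_cutoffGrad_le (hr : ∀ i ∈ F, 0 < r i) :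
    ∃ M : ℝ≥0, ∀ y, cutoffGrad F z r y ≤ M := by
  refine ⟨(∑ i ∈ F, (ENNReal.ofReal (r i))⁻¹).toNNReal, fun y => ?_⟩
  rw [ENNReal.coe_toNNReal (ENNReal.sum_ne_top.2 fun i hi => by simpa using hr i hi)]
  exact Finset.sum_le_sum fun _ _ => indicator_le_self' (fun _ _ => zero_le) _

variable [MeasurableSpace T] [OpensMeasurableSpace T] {μ : Measure T}

lemma integrable_one_sub_cutoff_mul [IsFiniteMeasure μ] {W : T → ℝ} (hW : Measurable W)
    (hW1 : ∀ y, |W y| ≤ 1) : Integrable (fun y => (1 - cutoff F z r y) * W y) μ := by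
  refine Integrable.of_bound
    ((measurable_const.sub continuous_cutoff.measurable).mul hW).aestronglyMeasurable 1
    (Eventually.of_forall fun y => ?_)
  rw [Real.norm_eq_abs, abs_mul]
  exact mul_le_one₀ (abs_one_sub_cutoff_le y) (abs_nonneg _) (hW1 y)

lemma measurable_cutoffGrad : Measurable (cutoffGrad F z r) :=
  Finset.measurable_fun_sum _ fun _ _ => measurable_const.indicator measurableSet_ball

lemma lintegral_cutoffGrad :
    ∫⁻ y, cutoffGrad F z r y ∂μ = ∑ i ∈ F, μ (ball (z i) (3 * r i)) / ENNReal.ofReal (r i) := by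
  simp only [cutoffGrad]
  rw [lintegral_finsetSum _ fun _ _ => measurable_const.indicator measurableSet_ball]
  simp only [lintegral_indicator_const measurableSet_ball, div_eq_mul_inv, mul_comm]

lemma lintegral_cutoff_le (hr : ∀ i ∈ F, 0 < r i) :
    ∫⁻ y, ‖cutoff F z r y‖ₑ ∂μ ≤ ∑ i ∈ F, μ (ball (z i) (2 * r i)) := by
  have hle : ∀ y, ‖cutoff F z r y‖ₑ ≤ (⋃ i ∈ F, ball (z i) (2 * r i)).indicator 1 y := by
    intro y
    by_cases hy : y ∈ ⋃ i ∈ F, ball (z i) (2 * r i)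
    · rw [indicator_of_mem hy, Real.enorm_of_nonneg (cutoff_nonneg y)]
      exact ENNReal.ofReal_le_one.2 (cutoff_le_one y)
    · rw [cutoff_eq_zero hr fun i hi h => hy (mem_biUnion hi h), enorm_zero]
      exact zero_le
  calc ∫⁻ y, ‖cutoff F z r y‖ₑ ∂μ
      ≤ ∫⁻ y, (⋃ i ∈ F, ball (z i) (2 * r i)).indicator 1 y ∂μ := lintegral_mono hle
    _ = μ (⋃ i ∈ F, ball (z i) (2 * r i)) :=
        lintegral_indicator_one (Finset.measurableSet_biUnion _ fun _ _ => measurableSet_ball)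
    _ ≤ _ := measure_biUnion_finset_le _ _

lemma lintegral_cutoffGrad_le_of_isDoubling {c : ℝ≥0} (hD : IsDoubling μ c)
    (hr : ∀ i ∈ F, 0 < r i) (hrd : ∀ i ∈ F, 2 ^ 2 * r i ≤ diam (univ : Set T)) :
    ∫⁻ y, cutoffGrad F z r y ∂μ ≤
      (c : ℝ≥0∞) ^ 2 * ∑ i ∈ F, μ (ball (z i) (r i)) / ENNReal.ofReal (r i) := by
  rw [lintegral_cutoffGrad, Finset.mul_sum]
  refine Finset.sum_le_sum fun i hi => ?_
  rw [← mul_div_assoc]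
  gcongr
  exact hD.measure_le_of_subset_ball 2 (hr i hi) (hrd i hi)
    (ball_subset_ball (by linarith [hr i hi]))

lemma lintegral_cutoff_le_of_isDoubling {c : ℝ≥0} (hD : IsDoubling μ c)
    (hr : ∀ i ∈ F, 0 < r i) (hrd : ∀ i ∈ F, 2 ^ 2 * r i ≤ diam (univ : Set T)) {R : ℝ}
    (hrR : ∀ i ∈ F, r i ≤ R) :
    ∫⁻ y, ‖cutoff F z r y‖ₑ ∂μ ≤ ENNReal.ofReal R *
      ((c : ℝ≥0∞) ^ 2 * ∑ i ∈ F, μ (ball (z i) (r i)) / ENNReal.ofReal (r i)) := by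
  refine (lintegral_cutoff_le hr).trans ?_
  rw [Finset.mul_sum, Finset.mul_sum]
  refine Finset.sum_le_sum fun i hi => ?_
  calc μ (ball (z i) (2 * r i)) ≤ (c : ℝ≥0∞) ^ 2 * μ (ball (z i) (r i)) :=
        hD.measure_le_of_subset_ball 2 (hr i hi) (hrd i hi)
          (ball_subset_ball (by linarith [hr i hi]))
    _ = ENNReal.ofReal (r i) *
        ((c : ℝ≥0∞) ^ 2 * (μ (ball (z i) (r i)) / ENNReal.ofReal (r i))) := by
        rw [mul_left_comm, ENNReal.mul_div_cancel (by simpa using hr i hi) ENNReal.ofReal_ne_top]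
    _ ≤ _ := by gcongr; exact hrR i hi

end Cutoff

section Isoperimetric

variable {T : Type*} [MetricSpace T] {u : T → ℝ} {g : T → ℝ≥0∞} {x : T} {R : ℝ}

lemma isUpperGradient_add_indicator_top {M : ℝ≥0} (hM : ∀ y, g y ≤ M)
    (h : ∀ y ∈ closedBall x R, ∀ᶠ y' in 𝓝 y, edist (u y') (u y) ≤ g y * edist y' y) :
    IsUpperGradient u fun y => g y + (ball x R)ᶜ.indicator (fun _ => ⊤) y := by
  intro γ
  rcases γ.hab.eq_or_lt with hab | hab
  · have : γ.start = γ.finish := congrArg γ.toFun hab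
    simp [this]
  by_cases hin : ∀ t ∈ Icc γ.a γ.b, γ.toFun t ∈ closedBall x R
  · exact (γ.edist_le_integral_of_eventually_edist_le (fun t _ => hM _)
      fun t ht => h _ (hin t ht)).trans (lintegral_mono fun t => le_self_add)
  · push Not at hin
    obtain ⟨t, ht, hout⟩ := hin
    rw [γ.integral_eq_top_of_notMem_closedBall hab (fun y hy => by simp [hy]) ht hout]
    exact le_top

variable [MeasurableSpace T] [BorelSpace T] {μ : Measure T} {K : ℝ≥0} {Λ R₀ : ℝ}

/-- `LocalPoincare` only sees the upper gradient on the ball `ball x (Λ * r)`. -/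
lemma LocalPoincare.lintegral_le_of_eventually_edist_le (hP : LocalPoincare μ K Λ R₀) {r : ℝ}
    (hr : 0 < r) (hrR : r ≤ R₀) (hu : LocallyIntegrable u μ) (hg : Measurable g)
    {M : ℝ≥0} (hM : ∀ y, g y ≤ M)
    (h : ∀ y ∈ closedBall x (Λ * r), ∀ᶠ y' in 𝓝 y, edist (u y') (u y) ≤ g y * edist y' y) :
    ∫⁻ y in ball x r, ‖u y - ⨍ z in ball x r, u z ∂μ‖ₑ ∂μ ≤
      K * ENNReal.ofReal r * ∫⁻ y, g y ∂μ := by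
  refine (hP u _ hu (hg.add (measurable_const.indicator measurableSet_ball.compl))
    (isUpperGradient_add_indicator_top hM h) x r hr hrR).trans ?_
  exact mul_le_mul_right ((setLIntegral_mono' measurableSet_ball fun y hy => by simp [hy]).trans
    (setLIntegral_le_lintegral _ _)) _

/-- Multiply `W` by `1 - w`, where `w` is the cutoff function of an almost optimal finite cover of
the part of `S` in the ball: `w` is small in `L¹` and `(1 - w) W` has a small upper gradient. -/
theorem exists_lintegral_enorm_sub_le_codimH [Nontrivial T] [CompactSpace T] [IsFiniteMeasure μ]
    {c : ℝ≥0} (hD : IsDoubling μ c) (hP : LocalPoincare μ K Λ R₀) {r : ℝ} (hr : 0 < r)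
    (hrR : r ≤ R₀) {S : Set T} (hS : IsClosed S) {W : T → ℝ} (hW : Measurable W)
    (hW1 : ∀ y, |W y| ≤ 1) (hWS : ∀ y ∈ closedBall x (Λ * r) \ S, ∀ᶠ y' in 𝓝 y, W y' = W y)
    {b : ℝ≥0∞} (hb : codimH μ (S ∩ closedBall x (Λ * r)) < b) :
    ∃ k : ℝ, ∫⁻ y in ball x r, ‖W y - k‖ₑ ∂μ ≤
      (K + 1) * (c : ℝ≥0∞) ^ 2 * ENNReal.ofReal r * b := by
  have hd : 0 < diam (univ : Set T) := diam_pos nontrivial_univ isCompact_univ.isBounded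
  obtain ⟨F, z, s, hs, hsle, hcov, hsum⟩ := exists_finset_cover_of_codimH_lt
    (hS.inter isClosed_closedBall).isCompact
    (lt_min hr (div_pos hd (by norm_num : (0 : ℝ) < 2 ^ 2))) hb
  have hsd : ∀ i ∈ F, 2 ^ 2 * s i ≤ diam (univ : Set T) := fun i hi => by
    rw [← le_div_iff₀' (by norm_num)]
    exact (hsle i hi).trans (min_le_right _ _)
  have hsr : ∀ i ∈ F, s i ≤ r := fun i hi => (hsle i hi).trans (min_le_left _ _)
  obtain ⟨M, hM⟩ := exists_forall_cutoffGrad_le (z := z) hs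
  let w := cutoff F z s
  let u : T → ℝ := fun y => (1 - w y) * W y
  have hmean := hP.lintegral_le_of_eventually_edist_le hr hrR
    (integrable_one_sub_cutoff_mul (F := F) (z := z) (r := s) hW hW1).locallyIntegrable
    measurable_cutoffGrad hM
    fun y hy => eventually_edist_one_sub_cutoff_mul_le hs hW1
      ((em (y ∈ S)).imp (fun h => hcov ⟨h, hy⟩) fun h => hWS y ⟨hy, h⟩)
  set k := ⨍ y in ball x r, u y ∂μ
  have hsplit : ∀ y, ‖W y - k‖ₑ ≤ ‖w y‖ₑ + ‖u y - k‖ₑ := fun y => by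
    rw [show W y - k = w y * W y + (u y - k) by simp only [u]; ring]
    refine (enorm_add_le _ _).trans (add_le_add_left ?_ _)
    rw [enorm_mul]
    exact mul_le_of_le_one_right' (by
      rw [Real.enorm_eq_ofReal_abs]; exact ENNReal.ofReal_le_one.2 (hW1 y))
  refine ⟨k, ?_⟩
  calc ∫⁻ y in ball x r, ‖W y - k‖ₑ ∂μ
      ≤ ∫⁻ y in ball x r, (‖w y‖ₑ + ‖u y - k‖ₑ) ∂μ := lintegral_mono hsplit
    _ = ∫⁻ y in ball x r, ‖w y‖ₑ ∂μ + ∫⁻ y in ball x r, ‖u y - k‖ₑ ∂μ :=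
        lintegral_add_left (f := fun y => ‖w y‖ₑ) continuous_cutoff.measurable.enorm _
    _ ≤ ENNReal.ofReal r * ((c : ℝ≥0∞) ^ 2 * b) +
          K * ENNReal.ofReal r * ((c : ℝ≥0∞) ^ 2 * b) := by
        gcongr
        · exact (setLIntegral_le_lintegral _ _).trans
            ((lintegral_cutoff_le_of_isDoubling hD hs hsd hsr).trans (by gcongr))
        · exact hmean.trans (mul_le_mul_right
            ((lintegral_cutoffGrad_le_of_isDoubling hD hs hsd).trans (by gcongr)) _)
    _ = (K + 1) * (c : ℝ≥0∞) ^ 2 * ENNReal.ofReal r * b := by ring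

end Isoperimetric

/-! ### Functions on the cover -/

section Newtonian

lemma setLIntegral_rpow_lt_top_of_le {X : Type*} [MeasurableSpace X] {ν : Measure X} {p : ℝ}
    {g : X → ℝ≥0∞} (hp : 0 ≤ p) {U : Set X} (hU : MeasurableSet U) (hνU : ν U < ⊤)
    {b : ℝ≥0∞} (hb : b ≠ ⊤) (hg : ∀ x ∈ U, g x ≤ b) :
    ∫⁻ x in U, g x ^ p ∂ν < ⊤ :=
  calc ∫⁻ x in U, g x ^ p ∂ν ≤ ∫⁻ _ in U, b ^ p ∂ν :=
        setLIntegral_mono' hU fun x hx => ENNReal.rpow_le_rpow (hg x hx) hp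
    _ = b ^ p * ν U := setLIntegral_const _ _
    _ < ⊤ := ENNReal.mul_lt_top (ENNReal.rpow_lt_top_of_nonneg hp hb) hνU

variable {X : Type*} [PseudoMetricSpace X] [MeasurableSpace X] {ν : Measure X} {p : ℝ}

lemma pathMod_empty (ν : Measure X) (hp : 0 < p) : pathMod ν p ∅ = 0 :=
  le_antisymm (iInf₂_le_of_le (fun _ => 0) ⟨measurable_const, by simp⟩
    (by simp [ENNReal.zero_rpow_of_pos hp])) bot_le

lemma IsUpperGradient.isWeakUpperGradient {Y : Type*} [PseudoEMetricSpace Y] {f : X → Y}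
    {g : X → ℝ≥0∞} (h : IsUpperGradient f g) (hp : 0 < p) : IsWeakUpperGradient ν p f g := by
  simp only [IsWeakUpperGradient, h _, not_true_eq_false, ofPred_false, pathMod_empty ν hp]

variable {u : X → ℝ} {g : X → ℝ≥0∞}

lemma IsUpperGradient.isWeakUpperGradientOn (h : IsUpperGradient u g) (hp : 0 < p) (U : Set X) :
    IsWeakUpperGradientOn ν p U u g := by
  simp only [IsWeakUpperGradientOn, h _, not_true_eq_false, and_false, ofPred_false,
    pathMod_empty _ hp]

lemma IsUpperGradient.memNloc [OpensMeasurableSpace X] [IsFiniteMeasureOnCompacts ν]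
    (h : IsUpperGradient u g) (hp : 0 < p) (hu : Continuous u) (hg : Measurable g) {M : ℝ≥0}
    (hM : ∀ x, g x ≤ M) : MemNloc ν p u := by
  intro U hU hUc
  have hνU : ν U < ⊤ := (measure_mono subset_closure).trans_lt hUc.measure_lt_top
  obtain ⟨b, hb⟩ := hUc.exists_bound_of_continuousOn hu.continuousOn
  exact ⟨setLIntegral_rpow_lt_top_of_le hp.le hU.measurableSet hνU ENNReal.ofReal_ne_top
      fun x hx => ENNReal.ofReal_le_ofReal (hb x (subset_closure hx)),
    g, hg, h.isWeakUpperGradientOn hp U,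
    setLIntegral_rpow_lt_top_of_le hp.le hU.measurableSet hνU ENNReal.coe_ne_top fun x _ => hM x⟩

end Newtonian

section LiftedMeasure

variable {T Tt : Type*} [MetricSpace T] [MetricSpace Tt] {π : Tt → T} {τ : Tt → Tt} {p : ℝ}

lemma CoverSetup.continuous (hπ : CoverSetup π) : Continuous π := hπ.1.continuous

lemma CoverSetup.eventually_edist_eq (hπ : CoverSetup π) (x : Tt) :
    ∀ᶠ z in 𝓝 x, edist (π z) (π x) = edist z x := by
  obtain ⟨ε, hε, h⟩ := hπ.2.2.1 x
  filter_upwards [ball_mem_nhds x hε] with z hz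
  rw [edist_dist, edist_dist, h z hz x (mem_ball_self hε)]

variable [MeasurableSpace T] [MeasurableSpace Tt] {μ : Measure T} {μt : Measure Tt}

lemma IsLiftedMeasure.measure_le_of_injOn (hμt : IsLiftedMeasure π μ μt) {A : Set Tt}
    (hA : MeasurableSet A) (hinj : InjOn π A) : μt A ≤ μ univ := by
  rw [hμt A hA, ← lintegral_one]
  refine lintegral_mono fun y => ?_
  have hfibre : (π ⁻¹' {y} ∩ A).encard ≤ 1 := encard_le_one_iff.2 fun a b ha hb =>
    hinj ha.2 hb.2 (ha.1.trans hb.1.symm)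
  simpa using ENat.toENNReal_le.2 hfibre

variable [BorelSpace Tt]

lemma IsLiftedMeasure.isFiniteMeasureOnCompacts [IsFiniteMeasure μ] (hπ : CoverSetup π)
    (hμt : IsLiftedMeasure π μ μt) : IsFiniteMeasureOnCompacts μt := by
  refine ⟨fun K hK => hK.measure_lt_top_of_nhdsWithin fun x _ => ?_⟩
  obtain ⟨ε, hε, h⟩ := hπ.2.2.1 x
  have hinj : InjOn π (ball x ε) := fun a ha b hb hab => by
    rw [← dist_eq_zero, ← h a ha b hb, hab, dist_self]
  exact ⟨ball x ε, mem_nhdsWithin_of_mem_nhds (ball_mem_nhds x hε),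
    (hμt.measure_le_of_injOn measurableSet_ball hinj).trans_lt (measure_lt_top μ univ)⟩

theorem memF_of_eventually_edist_le [BorelSpace T] [IsFiniteMeasure μ] (hp : 0 < p)
    (hπ : CoverSetup π) (hμt : IsLiftedMeasure π μ μt) {g : T → ℝ≥0∞} (hg : Measurable g)
    {M : ℝ≥0} (hM : ∀ x, g x ≤ M) {f : Tt → ℝ} (hfτ : ∀ x, f (τ x) - f x = 1)
    (hf : ∀ x, ∀ᶠ z in 𝓝 x, edist (f z) (f x) ≤ g (π x) * edist z x) : MemF π τ μt p g := by
  have hfin := hμt.isFiniteMeasureOnCompacts hπ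
  have hcont : Continuous f := continuous_of_eventually_edist_le ENNReal.coe_ne_top fun x =>
    (hf x).mono fun z hz => hz.trans (mul_le_mul_left (hM (π x)) _)
  have hug : IsUpperGradient f (g ∘ π) :=
    isUpperGradient_of_eventually_edist_le (fun x => hM (π x)) hf
  exact ⟨hg, f, hug.memNloc hp hcont (hg.comp hπ.continuous.measurable) fun x => hM (π x),
    Eventually.of_forall hfτ, hug.isWeakUpperGradient hp⟩

end LiftedMeasure

/-! ### Averages against tent functions -/

section Tent

variable {T : Type*} [MetricSpace T] {δ : ℝ} {x x' : T}

/-- The tent function of radius `δ` centred at `x`. -/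
def tent (δ : ℝ) (x y : T) : ℝ := max 0 (1 - dist x y / δ)

lemma tent_nonneg (δ : ℝ) (x y : T) : 0 ≤ tent δ x y := le_max_left _ _

lemma tent_le_one (hδ : 0 < δ) (x y : T) : tent δ x y ≤ 1 :=
  max_le zero_le_one (sub_le_self _ (by positivity))

lemma continuous_tent (δ : ℝ) (x : T) : Continuous (tent δ x) := by
  unfold tent; fun_prop

lemma tent_eq_zero (hδ : 0 < δ) {y : T} (hy : y ∉ ball x δ) : tent δ x y = 0 := by
  rw [mem_ball, not_lt, dist_comm] at hy
  exact max_eq_left (sub_nonpos.2 ((one_le_div hδ).2 hy))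

lemma abs_tent_sub_le (hδ : 0 < δ) (x x' y : T) :
    |tent δ x' y - tent δ x y| ≤ dist x' x / δ := by
  rw [tent, tent, max_comm 0, max_comm 0]
  refine (abs_max_sub_max_le_abs _ _ _).trans ?_
  rw [sub_sub_sub_cancel_left, ← sub_div, abs_div, abs_of_pos hδ, abs_sub_comm]
  gcongr
  exact abs_dist_sub_le x' x y

lemma half_le_tent (hδ : 0 < δ) (hx : dist x' x ≤ δ / 4) {y : T} (hy : y ∈ ball x (δ / 4)) :
    1 / 2 ≤ tent δ x' y := by
  have hdist : dist x' y / δ ≤ 1 / 2 := by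
    rw [div_le_iff₀ hδ]
    linarith [dist_triangle_right x' y x, mem_ball.1 hy]
  exact le_max_of_le_right (by linarith)

lemma ball_subset_ball_two_mul (hδ : 0 < δ) (hx : dist x' x ≤ δ / 4) :
    ball x' δ ⊆ ball x (2 * δ) := ball_subset_ball' (by linarith)

variable [MeasurableSpace T] {μ : Measure T}

/-- The tent function at `x`, normalized to be a probability density. -/
def tentKernel (μ : Measure T) (δ : ℝ) (x y : T) : ℝ := tent δ x y / ∫ z, tent δ x z ∂μ

/-- The average of `g` against the tent function at `x`: a ball average depending in a Lipschitz
way on `x`. -/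
def tentAvg (μ : Measure T) (δ : ℝ) (g : T → ℝ) (x : T) : ℝ := ∫ y, tentKernel μ δ x y * g y ∂μ

lemma tentKernel_eq_zero (hδ : 0 < δ) {y : T} (hy : y ∉ ball x δ) : tentKernel μ δ x y = 0 := by
  rw [tentKernel, tent_eq_zero hδ hy, zero_div]

lemma tentAvg_congr (hδ : 0 < δ) {g h : T → ℝ} (hgh : EqOn g h (ball x δ)) :
    tentAvg μ δ g x = tentAvg μ δ h x := by
  refine integral_congr_ae (Eventually.of_forall fun y => ?_)
  by_cases hy : y ∈ ball x δ
  · simp only [hgh hy]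
  · simp only [tentKernel_eq_zero hδ hy, zero_mul]

lemma measureReal_ball_pos [IsFiniteMeasure μ] [μ.IsOpenPosMeasure] (x : T) {r : ℝ}
    (hr : 0 < r) : 0 < μ.real (ball x r) :=
  ENNReal.toReal_pos (measure_ball_pos μ x hr).ne' (measure_ne_top μ _)

variable [BorelSpace T]

lemma integrable_tentKernel_mul (hδ : 0 < δ) (x : T) {g : T → ℝ} (hg : Integrable g μ) :
    Integrable (fun y => tentKernel μ δ x y * g y) μ := by
  have htent : Integrable (fun y => tent δ x y * g y) μ :=
    hg.bdd_mul (continuous_tent δ x).measurable.aestronglyMeasurable (c := 1)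
      (Eventually.of_forall fun y => by
        rw [Real.norm_of_nonneg (tent_nonneg δ x y)]
        exact tent_le_one hδ x y)
  simpa only [tentKernel, div_mul_eq_mul_div] using htent.div_const _

variable [IsFiniteMeasure μ]

lemma integrable_tent (hδ : 0 < δ) (x : T) : Integrable (tent δ x) μ :=
  Integrable.of_bound (continuous_tent δ x).measurable.aestronglyMeasurable 1
    (Eventually.of_forall fun y => by
      rw [Real.norm_of_nonneg (tent_nonneg δ x y)]
      exact tent_le_one hδ x y)

lemma half_measureReal_ball_le_integral_tent (hδ : 0 < δ) (hx : dist x' x ≤ δ / 4) :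
    μ.real (ball x (δ / 4)) / 2 ≤ ∫ y, tent δ x' y ∂μ :=
  calc μ.real (ball x (δ / 4)) / 2
      = ∫ y, (ball x (δ / 4)).indicator (fun _ => (1 / 2 : ℝ)) y ∂μ := by
        rw [integral_indicator measurableSet_ball, setIntegral_const, smul_eq_mul]; ring
    _ ≤ _ := integral_mono ((integrable_const _).indicator measurableSet_ball)
        (integrable_tent hδ x') fun y =>
          indicator_le' (fun y hy => half_le_tent hδ hx hy) (fun y _ => tent_nonneg δ x' y) y

lemma abs_integral_tent_sub_le (hδ : 0 < δ) (hx : dist x' x ≤ δ / 4) :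
    |∫ y, tent δ x' y ∂μ - ∫ y, tent δ x y ∂μ| ≤
      dist x' x / δ * μ.real (ball x (2 * δ)) := by
  have hvanish : ∀ y ∉ ball x (2 * δ), tent δ x' y - tent δ x y = 0 := fun y hy => by
    rw [tent_eq_zero hδ fun h => hy (ball_subset_ball_two_mul hδ hx h),
      tent_eq_zero hδ fun h => hy (ball_subset_ball (by linarith) h), sub_zero]
  rw [← integral_sub (integrable_tent hδ x') (integrable_tent hδ x),
    ← setIntegral_eq_integral_of_forall_compl_eq_zero hvanish]
  exact norm_setIntegral_le_of_norm_le_const (f := fun y => tent δ x' y - tent δ x y)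
    (measure_lt_top μ _) fun y _ => abs_tent_sub_le hδ x x' y

lemma abs_tentKernel_sub_le (hδ : 0 < δ) (hx : dist x' x ≤ δ / 4)
    (hm : 0 < μ.real (ball x (δ / 4))) {A : ℝ}
    (hA : μ.real (ball x (2 * δ)) ≤ A * μ.real (ball x (δ / 4))) (y : T) :
    |tentKernel μ δ x' y - tentKernel μ δ x y| ≤
      (2 + 4 * A) / (δ * μ.real (ball x (δ / 4))) * dist x' x := by
  set m := μ.real (ball x (δ / 4))
  set J := ∫ z, tent δ x z ∂μ
  set J₁ := ∫ z, tent δ x' z ∂μ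
  have hJ : m / 2 ≤ J :=
    half_measureReal_ball_le_integral_tent hδ (by rw [dist_self]; positivity)
  have hJ₁ : m / 2 ≤ J₁ := half_measureReal_ball_le_integral_tent hδ hx
  have hJpos : 0 < J := (half_pos hm).trans_le hJ
  have hJpos₁ : 0 < J₁ := (half_pos hm).trans_le hJ₁
  have hJJ : |J₁ - J| ≤ dist x' x / δ * (A * m) :=
    (abs_integral_tent_sub_le hδ hx).trans (by gcongr)
  have hAm : 0 ≤ A * m := measureReal_nonneg.trans hA
  calc |tent δ x' y / J₁ - tent δ x y / J|
      = |(tent δ x' y - tent δ x y) / J₁ + tent δ x y * (J - J₁) / (J * J₁)| := by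
        congr 1; field_simp; ring
    _ ≤ |tent δ x' y - tent δ x y| / J₁ + tent δ x y * |J₁ - J| / (J * J₁) := by
        refine (abs_add_le _ _).trans_eq ?_
        rw [abs_div, abs_div, abs_mul, abs_mul, abs_of_pos hJpos, abs_of_pos hJpos₁,
          abs_of_nonneg (tent_nonneg δ x y), abs_sub_comm J J₁]
    _ ≤ dist x' x / δ / (m / 2) + 1 * (dist x' x / δ * (A * m)) / (m / 2 * (m / 2)) := by
        gcongr
        · exact abs_tent_sub_le hδ x x' y
        · exact tent_le_one hδ x y
    _ = _ := by field_simp; ring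

section OpenPos

variable [μ.IsOpenPosMeasure]

lemma integral_tent_pos (hδ : 0 < δ) (x : T) : 0 < ∫ y, tent δ x y ∂μ :=
  (half_pos (measureReal_ball_pos x (by positivity : 0 < δ / 4))).trans_le
    (half_measureReal_ball_le_integral_tent hδ (by rw [dist_self]; positivity))

lemma integral_tentKernel (hδ : 0 < δ) (x : T) : ∫ y, tentKernel μ δ x y ∂μ = 1 := by
  simp only [tentKernel]
  rw [integral_div, div_self (integral_tent_pos hδ x).ne']

lemma tentAvg_add_const (hδ : 0 < δ) (x : T) {g : T → ℝ} (hg : Integrable g μ) (k : ℝ) :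
    tentAvg μ δ (fun y => g y + k) x = tentAvg μ δ g x + k := by
  simp only [tentAvg, mul_add]
  rw [integral_add (integrable_tentKernel_mul hδ x hg)
    (integrable_tentKernel_mul hδ x (integrable_const k)), integral_mul_const,
    integral_tentKernel hδ, one_mul]

/-- Replacing `g` by `g - k` does not change the difference of the two averages. -/
lemma edist_tentAvg_le (hδ : 0 < δ) (hx : dist x' x ≤ δ / 4) {A : ℝ}
    (hA : μ.real (ball x (2 * δ)) ≤ A * μ.real (ball x (δ / 4))) {g : T → ℝ}
    (hg : Integrable g μ) (k : ℝ) :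
    edist (tentAvg μ δ g x') (tentAvg μ δ g x) ≤
      ENNReal.ofReal ((2 + 4 * A) / (δ * μ.real (ball x (δ / 4)))) * edist x' x *
        ∫⁻ y in ball x (2 * δ), ‖g y - k‖ₑ ∂μ := by
  have hm : 0 < μ.real (ball x (δ / 4)) := measureReal_ball_pos x (by positivity)
  have hgk : Integrable (fun y => g y - k) μ := hg.sub (integrable_const k)
  have hvanish : ∀ y ∉ ball x (2 * δ), (tentKernel μ δ x' y - tentKernel μ δ x y) * (g y - k) = 0 :=
    fun y hy => by
      rw [tentKernel_eq_zero hδ fun h => hy (ball_subset_ball_two_mul hδ hx h),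
        tentKernel_eq_zero hδ fun h => hy (ball_subset_ball (by linarith) h), sub_zero, zero_mul]
  have hdiff : tentAvg μ δ g x' - tentAvg μ δ g x =
      ∫ y in ball x (2 * δ), (tentKernel μ δ x' y - tentKernel μ δ x y) * (g y - k) ∂μ := by
    rw [setIntegral_eq_integral_of_forall_compl_eq_zero hvanish]
    simp only [sub_mul]
    rw [integral_sub (integrable_tentKernel_mul hδ x' hgk) (integrable_tentKernel_mul hδ x hgk)]
    have hshift := fun z => tentAvg_add_const hδ z hg (-k)
    simp only [← sub_eq_add_neg] at hshift
    rw [← tentAvg, ← tentAvg, hshift, hshift, sub_sub_sub_cancel_right]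
  rw [edist_eq_enorm_sub, hdiff]
  refine (enorm_integral_le_lintegral_enorm _).trans ?_
  rw [← lintegral_const_mul' _ _ (ENNReal.mul_ne_top ENNReal.ofReal_ne_top (edist_ne_top _ _))]
  refine lintegral_mono fun y => ?_
  have hAm : 0 ≤ A := nonneg_of_mul_nonneg_left (measureReal_nonneg.trans hA) hm
  rw [enorm_mul, edist_dist, ← ENNReal.ofReal_mul (by positivity), Real.enorm_eq_ofReal_abs]
  gcongr
  exact abs_tentKernel_sub_le hδ hx hm hA y

end OpenPos

end Tent

/-! ### The competitor of a level set -/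

section Jump

lemma exists_int_of_coe_eq_zero {t : ℝ} (h : (t : UnitAddCircle) = 0) : ∃ n : ℤ, (n : ℝ) = t := by
  obtain ⟨n, hn⟩ := (AddCircle.coe_eq_zero_iff _).1 h
  exact ⟨n, by simpa using hn⟩

lemma eq_zero_of_coe_eq_zero {t : ℝ} (h : (t : UnitAddCircle) = 0) (ht : |t| < 1) : t = 0 := by
  obtain ⟨n, rfl⟩ := exists_int_of_coe_eq_zero h
  have hn : |n| < 1 := by exact_mod_cast ht
  simpa using Int.abs_lt_one_iff.1 hn

lemma abs_le_one_of_coe_eq_zero {t : ℝ} (h : (t : UnitAddCircle) = 0) (ht : |t| < 2) :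
    |t| ≤ 1 := by
  obtain ⟨n, rfl⟩ := exists_int_of_coe_eq_zero h
  have hn : |n| < 2 := by exact_mod_cast ht
  exact_mod_cast Int.lt_add_one_iff.1 hn

/-- The representative in `[a, a + 1)` of a point of the circle. -/
def circleRep (a : ℝ) (z : UnitAddCircle) : ℝ := AddCircle.equivIco 1 a z

lemma coe_circleRep (a : ℝ) (z : UnitAddCircle) : (circleRep a z : UnitAddCircle) = z :=
  AddCircle.coe_equivIco

lemma circleRep_mem (a : ℝ) (z : UnitAddCircle) : circleRep a z ∈ Ico a (a + 1) :=
  (AddCircle.equivIco 1 a z).2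

lemma measurable_circleRep (a : ℝ) : Measurable (circleRep a) :=
  measurable_subtype_coe.comp (AddCircle.measurableEquivIco 1 a).measurable

lemma continuousAt_circleRep {a : ℝ} {z : UnitAddCircle} (hz : z ≠ a) :
    ContinuousAt (circleRep a) z :=
  continuousAt_subtype_val.comp (AddCircle.continuousAt_equivIco 1 a hz)

lemma abs_circleRep_neg_half (z : UnitAddCircle) : |circleRep (-(1 / 2)) z| = ‖z‖ := by
  have hmem := circleRep_mem (-(1 / 2)) z
  conv_rhs => rw [← coe_circleRep (-(1 / 2)) z]
  refine ((AddCircle.norm_coe_eq_abs_iff _ one_ne_zero).2 ?_).symm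
  rw [abs_one, abs_le]
  exact ⟨hmem.1, by linarith [hmem.2]⟩

lemma circleRep_sub_circleRep {w : UnitAddCircle} {s t : ℝ} (hst : |t - s| < 1 / 4)
    (hs : ‖w - s‖ < 1 / 4) (ht : ‖w - t‖ < 1 / 4) :
    circleRep (-(1 / 2)) (w - s) - circleRep (-(1 / 2)) (w - t) = t - s := by
  rw [← abs_circleRep_neg_half] at hs ht
  refine sub_eq_zero.1 (eq_zero_of_coe_eq_zero ?_ ?_)
  · simp only [AddCircle.coe_sub, coe_circleRep]; abel
  · rw [abs_lt] at *
    constructor <;> linarith [hs.1, hs.2, ht.1, ht.2, hst.1, hst.2]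

variable {T : Type*} {φ : T → UnitAddCircle}

/-- With `θ` the representative of smallest absolute value, the function
`y ↦ θ (φ y - φ x) - [φ y] + [φ x]`. It is integer valued, and near `x` it jumps only across the
level set `φ⁻¹{0}`. -/
def jump (φ : T → UnitAddCircle) (x y : T) : ℝ :=
  circleRep (-(1 / 2)) (φ y - φ x) - circleRep 0 (φ y) + circleRep 0 (φ x)

lemma coe_jump (φ : T → UnitAddCircle) (x y : T) : (jump φ x y : UnitAddCircle) = 0 := by
  simp only [jump, AddCircle.coe_add, AddCircle.coe_sub, coe_circleRep]; abel

lemma abs_jump_le_one (φ : T → UnitAddCircle) (x y : T) : |jump φ x y| ≤ 1 := by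
  have hθ := circleRep_mem (-(1 / 2)) (φ y - φ x)
  have hy := circleRep_mem 0 (φ y)
  have hx := circleRep_mem 0 (φ x)
  refine abs_le_one_of_coe_eq_zero (coe_jump φ x y) ?_
  rw [jump, abs_lt]
  constructor <;> linarith [hθ.1, hθ.2, hy.1, hy.2, hx.1, hx.2]

variable [TopologicalSpace T]

lemma eventually_jump_eq (hφ : Continuous φ) {x y : T} (hxy : ‖φ y - φ x‖ < 1 / 4)
    (hy : φ y ≠ 0) : ∀ᶠ z in 𝓝 y, jump φ x z = jump φ x y := by
  have hne : φ y - φ x ≠ ((-(1 / 2) : ℝ) : UnitAddCircle) := by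
    intro he
    rw [he, (AddCircle.norm_coe_eq_abs_iff _ one_ne_zero).2 (by norm_num)] at hxy
    norm_num at hxy
  have hcont : ContinuousAt (jump φ x) y :=
    (((continuousAt_circleRep hne).comp (f := fun z => φ z - φ x)
      (hφ.sub continuous_const).continuousAt).sub
      ((continuousAt_circleRep (by simpa using hy)).comp hφ.continuousAt)).add continuousAt_const
  filter_upwards [Metric.tendsto_nhds.1 hcont 1 one_pos] with z hz
  rw [Real.dist_eq] at hz
  exact sub_eq_zero.1 (eq_zero_of_coe_eq_zero (by simp [coe_jump]) hz)

variable [MeasurableSpace T] [BorelSpace T]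

lemma measurable_jump (hφ : Continuous φ) (x : T) : Measurable (jump φ x) :=
  (((measurable_circleRep _).comp (hφ.sub continuous_const).measurable).sub
    ((measurable_circleRep _).comp hφ.measurable)).add_const _

lemma integrable_jump {μ : Measure T} [IsFiniteMeasure μ] (hφ : Continuous φ) (x : T) :
    Integrable (jump φ x) μ :=
  Integrable.of_bound (measurable_jump hφ x).aestronglyMeasurable 1
    (Eventually.of_forall fun y => abs_jump_le_one φ x y)

end Jump

section BallDensity

variable {T : Type*} [MetricSpace T] [MeasurableSpace T] {μ ν : Measure T} {r R : ℝ}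

/-- The measure `ν` smeared out at the scales `R` and `r`, as a density with respect to `μ`. -/
def ballDensity (μ ν : Measure T) (R r : ℝ) (x : T) : ℝ≥0∞ := ν (closedBall x R) / μ (ball x r)

lemma exists_pos_le_measure_ball [CompactSpace T] [μ.IsOpenPosMeasure] (hr : 0 < r) :
    ∃ m : ℝ≥0∞, m ≠ 0 ∧ ∀ x, m ≤ μ (ball x r) := by
  obtain ⟨t, -, hfin, ht⟩ := finite_cover_balls_of_compact (isCompact_univ (X := T)) (half_pos hr)
  rcases t.eq_empty_or_nonempty with rfl | hne
  · exact ⟨1, one_ne_zero, fun x => by simpa using ht (mem_univ x)⟩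
  obtain ⟨z₀, -, hz₀⟩ := exists_min_image t (fun z => μ (ball z (r / 2))) hfin hne
  refine ⟨_, (measure_ball_pos μ z₀ (half_pos hr)).ne', fun x => ?_⟩
  obtain ⟨z, hz, hxz⟩ := mem_iUnion₂.1 (ht (mem_univ x))
  refine (hz₀ z hz).trans (measure_mono (ball_subset_ball' ?_))
  linarith [mem_ball'.1 hxz]

lemma exists_forall_ballDensity_le [CompactSpace T] [μ.IsOpenPosMeasure] [IsFiniteMeasure ν]
    (R : ℝ) (hr : 0 < r) : ∃ M : ℝ≥0, ∀ x, ballDensity μ ν R r x ≤ M := by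
  obtain ⟨m, hm, hle⟩ := exists_pos_le_measure_ball (μ := μ) hr
  refine ⟨(ν univ / m).toNNReal, fun x => ?_⟩
  rw [ENNReal.coe_toNNReal (ENNReal.div_ne_top (measure_ne_top ν _) hm)]
  exact ENNReal.div_le_div (measure_mono (subset_univ _)) (hle x)

variable [OpensMeasurableSpace T] [SecondCountableTopology T]

lemma measurable_measure_closedBall (ν : Measure T) [SFinite ν] (R : ℝ) :
    Measurable fun x => ν (closedBall x R) :=
  measurable_measure_prodMk_left (s := {q : T × T | dist q.2 q.1 ≤ R})
    (isClosed_le (by fun_prop) continuous_const).measurableSet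

lemma measurable_measure_ball (ν : Measure T) [SFinite ν] (R : ℝ) :
    Measurable fun x => ν (ball x R) :=
  measurable_measure_prodMk_left (s := {q : T × T | dist q.2 q.1 < R})
    (isOpen_lt (by fun_prop) continuous_const).measurableSet

lemma measurable_ballDensity [SFinite μ] [SFinite ν] : Measurable (ballDensity μ ν R r) :=
  (measurable_measure_closedBall ν R).div (measurable_measure_ball μ r)

end BallDensity

section Competitor

variable {T Tt : Type*} [MetricSpace T] [MetricSpace Tt] [MeasurableSpace T] [BorelSpace T]
  {μ : Measure T} [IsFiniteMeasure μ] [μ.IsOpenPosMeasure] {π : Tt → T} {τ : Tt → Tt}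
  {φ : T → UnitAddCircle} {c K : ℝ≥0} {Λ R₀ r : ℝ} {x x' : T}

/-- The competitor `φ̃ - [φ] + ⨍ (θ - [φ])` for the surface `φ⁻¹{0}`, where `φt` stands for the lift
`φ̃` of `φ` and the average is taken at scale `δ`. -/
def competitor (μ : Measure T) (δ : ℝ) (φ : T → UnitAddCircle) (π : Tt → T) (φt : Tt → ℝ)
    (x : Tt) : ℝ :=
  φt x - circleRep 0 (φ (π x)) + tentAvg μ δ (jump φ (π x)) (π x)

/-- Near `x` the jump functions at `π z` and `π x` differ by a constant, which cancels the
difference of the first two terms of the competitor. -/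
lemma eventually_competitor_sub_eq (hπ : Continuous π) (hφ : Continuous φ) {φt : Tt → ℝ}
    (hφt : Continuous φt) (hlift : ∀ x, (φt x : UnitAddCircle) = φ (π x)) {δ : ℝ} (hδ : 0 < δ)
    (hunif : ∀ x y, dist x y < 2 * δ → ‖φ y - φ x‖ < 1 / 4) (x : Tt) :
    ∀ᶠ z in 𝓝 x, competitor μ δ φ π φt z - competitor μ δ φ π φt x =
      tentAvg μ δ (jump φ (π x)) (π z) - tentAvg μ δ (jump φ (π x)) (π x) := by
  filter_upwards [Metric.tendsto_nhds.1 (hφt.tendsto x) (1 / 4) (by norm_num),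
    Metric.tendsto_nhds.1 (hπ.tendsto x) δ hδ] with z hφtz hπz
  have hjump : EqOn (jump φ (π z)) (fun y => jump φ (π x) y +
      (φt x - circleRep 0 (φ (π x)) - (φt z - circleRep 0 (φ (π z))))) (ball (π z) δ) := by
    intro y hy
    rw [mem_ball'] at hy
    have hθ := circleRep_sub_circleRep hφtz
      (hlift x ▸ hunif (π x) y (by linarith [dist_triangle_left (π x) y (π z)]))
      (hlift z ▸ hunif (π z) y (by linarith))
    simp only [jump, ← hlift x, ← hlift z] at hθ ⊢
    linarith
  rw [competitor, competitor, tentAvg_congr hδ hjump,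
    tentAvg_add_const hδ _ (integrable_jump hφ (π x))]
  ring

lemma IsDoubling.edist_tentAvg_le (hD : IsDoubling μ c) (hr : 0 < r)
    (hrd : r ≤ diam (univ : Set T)) (hx : dist x' x ≤ r / 8) {g : T → ℝ} (hg : Integrable g μ)
    (k : ℝ) :
    edist (tentAvg μ (r / 2) g x') (tentAvg μ (r / 2) g x) ≤
      (4 + 8 * c ^ 3) * c ^ 3 / (ENNReal.ofReal r * μ (ball x r)) * edist x' x *
        ∫⁻ y in ball x r, ‖g y - k‖ₑ ∂μ := by
  have hscale : r / 2 / 4 = r / 8 := by ring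
  have hpos : 0 < μ.real (ball x r) := measureReal_ball_pos x hr
  have hpos₈ : 0 < μ.real (ball x (r / 8)) := measureReal_ball_pos x (by positivity)
  have hA : μ.real (ball x r) ≤ (c : ℝ) ^ 3 * μ.real (ball x (r / 8)) := by
    have hdouble := hD.measure_le_of_subset_ball 3 (A := ball x r) (r := r / 8) (by positivity)
      (by linarith) (ball_subset_ball (by linarith))
    simpa [Measure.real] using ENNReal.toReal_mono (by finiteness) hdouble
  have hmain := Duality.edist_tentAvg_le (half_pos hr) (x := x) (x' := x') (A := (c : ℝ) ^ 3)
    (by linarith) (by rwa [hscale, mul_div_cancel₀ r two_ne_zero]) hg k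
  rw [hscale, mul_div_cancel₀ r two_ne_zero] at hmain
  have hconst : (2 + 4 * (c : ℝ) ^ 3) / (r / 2 * μ.real (ball x (r / 8))) ≤
      (4 + 8 * c ^ 3) * c ^ 3 / (r * μ.real (ball x r)) := by
    rw [div_le_div_iff₀ (by positivity) (by positivity)]
    nlinarith [mul_le_mul_of_nonneg_left hA (by positivity : 0 ≤ (2 + 4 * (c : ℝ) ^ 3) * r)]
  refine hmain.trans (mul_le_mul_left (mul_le_mul_left ?_ _) _)
  refine (ENNReal.ofReal_le_ofReal hconst).trans_eq ?_
  rw [ENNReal.ofReal_div_of_pos (by positivity), ENNReal.ofReal_mul hr.le, ofReal_measureReal]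
  congr 1
  rw [show (4 + 8 * (c : ℝ) ^ 3) * (c : ℝ) ^ 3 = (((4 + 8 * c ^ 3) * c ^ 3 : ℝ≥0) : ℝ) by simp,
    ENNReal.ofReal_coe_nnreal]
  push_cast
  rfl

/-- The constant in the Lipschitz estimate for the competitor: the doubling constant is `c` and the
constant in the Poincaré inequality is `K`. -/
def gradConst (c K : ℝ≥0) : ℝ≥0 := (4 + 8 * c ^ 3) * c ^ 3 * ((K + 1) * c ^ 2)

lemma le_mul_of_forall_lt_le_mul {a k h : ℝ≥0∞} (hk : k ≠ ⊤) (hh : h ≠ ⊤)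
    (hle : ∀ b, h < b → a ≤ k * b) : a ≤ k * h := by
  have : (𝓝[>] h).NeBot := nhdsGT_neBot_of_exists_gt ⟨⊤, hh.lt_top⟩
  exact ge_of_tendsto ((ENNReal.continuous_const_mul hk).continuousWithinAt (s := Ioi h)).tendsto
    (eventually_nhdsWithin_of_forall hle)

variable [Nontrivial T] [CompactSpace T]

lemma edist_tentAvg_jump_le (hD : IsDoubling μ c) (hP : LocalPoincare μ K Λ R₀) (hr : 0 < r)
    (hrR : r ≤ R₀) (hrd : r ≤ diam (univ : Set T)) (hφ : Continuous φ)
    (hunif : ∀ y ∈ closedBall x (Λ * r), ‖φ y - φ x‖ < 1 / 4) (hx : dist x' x ≤ r / 8)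
    (hfin : codimH μ (φ ⁻¹' {0}) < ⊤) :
    edist (tentAvg μ (r / 2) (jump φ x) x') (tentAvg μ (r / 2) (jump φ x) x) ≤
      gradConst c K * (codimH μ (φ ⁻¹' {0} ∩ closedBall x (Λ * r)) / μ (ball x r)) *
        edist x' x := by
  have hρ : ENNReal.ofReal r ≠ 0 := by simpa using hr
  have hball : μ (ball x r) ≠ 0 := (measure_ball_pos μ x hr).ne'
  suffices hle : ∀ b, codimH μ (φ ⁻¹' {0} ∩ closedBall x (Λ * r)) < b →
      edist (tentAvg μ (r / 2) (jump φ x) x') (tentAvg μ (r / 2) (jump φ x) x) ≤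
        gradConst c K * (μ (ball x r))⁻¹ * edist x' x * b by
    refine (le_mul_of_forall_lt_le_mul ?_ ?_ hle).trans_eq (by rw [div_eq_mul_inv]; ring)
    · exact ENNReal.mul_ne_top (ENNReal.mul_ne_top ENNReal.coe_ne_top
        (ENNReal.inv_ne_top.2 hball)) (edist_ne_top _ _)
    · exact ((codimH_mono μ inter_subset_left).trans_lt hfin).ne
  intro b hb
  obtain ⟨k, hk⟩ := exists_lintegral_enorm_sub_le_codimH hD hP hr hrR
    (isClosed_singleton.preimage hφ) (measurable_jump hφ x) (abs_jump_le_one φ x)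
    (fun y hy => eventually_jump_eq hφ (hunif y hy.1) hy.2) hb
  calc edist (tentAvg μ (r / 2) (jump φ x) x') (tentAvg μ (r / 2) (jump φ x) x)
      ≤ (4 + 8 * c ^ 3) * c ^ 3 / (ENNReal.ofReal r * μ (ball x r)) * edist x' x *
          ∫⁻ y in ball x r, ‖jump φ x y - k‖ₑ ∂μ :=
        hD.edist_tentAvg_le hr hrd hx (integrable_jump hφ x) k
    _ ≤ (4 + 8 * c ^ 3) * c ^ 3 / (ENNReal.ofReal r * μ (ball x r)) * edist x' x *
          ((K + 1) * (c : ℝ≥0∞) ^ 2 * ENNReal.ofReal r * b) := by gcongr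
    _ = (4 + 8 * c ^ 3) * c ^ 3 * ((K + 1) * c ^ 2) *
          ((ENNReal.ofReal r)⁻¹ * ENNReal.ofReal r) * (μ (ball x r))⁻¹ * edist x' x * b := by
        rw [div_eq_mul_inv, ENNReal.mul_inv (.inl hρ) (.inl ENNReal.ofReal_ne_top)]; ring
    _ = gradConst c K * (μ (ball x r))⁻¹ * edist x' x * b := by
        rw [ENNReal.inv_mul_cancel hρ ENNReal.ofReal_ne_top, mul_one, gradConst]
        push_cast
        rfl

variable [MeasurableSpace Tt] [BorelSpace Tt] {μt : Measure Tt} {x₀ : T} {α₀ : Path x₀ x₀} {p : ℝ}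

lemma memF_ballDensity (hp : 0 < p) (hD : IsDoubling μ c)
    (hP : LocalPoincare μ K Λ R₀) (hπ : CoverSetup π) (hτ : IsDeck π x₀ α₀ τ)
    (hμt : IsLiftedMeasure π μ μt) (hφ : Continuous φ) (hfin : codimH μ (φ ⁻¹' {0}) < ⊤)
    {φt : Tt → ℝ} (hφt : Continuous φt) (hlift : ∀ x, (φt x : UnitAddCircle) = φ (π x))
    (hequiv : ∀ x, φt (τ x) = φt x + 1) (hΛ : 1 ≤ Λ) (hr : 0 < r) (hrR : r ≤ R₀)
    (hrd : r ≤ diam (univ : Set T)) (hunif : ∀ x y, dist x y ≤ Λ * r → ‖φ y - φ x‖ < 1 / 4) :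
    MemF π τ μt p fun x =>
      gradConst c K * ballDensity μ (surfaceMeasure μ (φ ⁻¹' {0})) (Λ * r) r x := by
  have hS : MeasurableSet (φ ⁻¹' {0}) := (isClosed_singleton.preimage hφ).measurableSet
  have hfinite := isFiniteMeasure_surfaceMeasure hS hfin
  obtain ⟨M, hM⟩ := exists_forall_ballDensity_le (μ := μ)
    (ν := surfaceMeasure μ (φ ⁻¹' {0})) (Λ * r) hr
  have hrΛ : r ≤ Λ * r := le_mul_of_one_le_left hr.le hΛ
  refine memF_of_eventually_edist_le hp hπ hμt (measurable_ballDensity.const_mul _)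
    (M := gradConst c K * M)
    (fun x => by rw [ENNReal.coe_mul]; exact mul_le_mul_right (hM x) _)
    (f := competitor μ (r / 2) φ π φt) (fun x => ?_) fun x => ?_
  · simp only [competitor, hτ.2.1 x, hequiv]
    ring
  · filter_upwards [eventually_competitor_sub_eq (μ := μ) hπ.continuous hφ hφt hlift
      (half_pos hr) (fun y z hyz => hunif y z (by linarith)) x, hπ.eventually_edist_eq x,
      ball_mem_nhds x (by positivity : 0 < r / 8)] with z hsub hdist hz
    have hdist' : dist (π z) (π x) ≤ r / 8 := by
      rw [dist_edist, hdist, ← dist_edist]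
      exact (mem_ball.1 hz).le
    rw [edist_eq_enorm_sub, hsub, ← edist_eq_enorm_sub, ← hdist, ballDensity,
      surfaceMeasure_apply μ hS measurableSet_closedBall]
    exact edist_tentAvg_jump_le hD hP hr hrR hrd hφ
      (fun y hy => hunif (π x) y (mem_closedBall'.1 hy)) hdist' hfin

theorem eventually_memF_ballDensity [LocallyPathConnectedSpace T] (hp : 0 < p)
    (hD : IsDoubling μ c) (hP : LocalPoincare μ K Λ R₀) (hΛ : 1 ≤ Λ) (hR₀ : 0 < R₀)
    (hπ : CoverSetup π) (hτ : IsDeck π x₀ α₀ τ) (hμt : IsLiftedMeasure π μ μt)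
    (hφ : HasDegree x₀ α₀ φ 1) (hfin : codimH μ (φ ⁻¹' {0}) < ⊤) :
    ∀ᶠ r in 𝓝[>] 0, MemF π τ μt p fun x =>
      gradConst c K * ballDensity μ (surfaceMeasure μ (φ ⁻¹' {0})) (Λ * r) r x := by
  obtain ⟨φt, hlift, hequiv⟩ := exists_lift_of_hasDegree_one hπ hτ hφ
  obtain ⟨η, hη, hunif⟩ := Metric.uniformContinuous_iff.1
    (CompactSpace.uniformContinuous_of_continuous hφ.1) (1 / 4) (by norm_num)
  have hd : 0 < diam (univ : Set T) := diam_pos nontrivial_univ isCompact_univ.isBounded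
  have hΛpos : 0 < Λ := one_pos.trans_le hΛ
  filter_upwards [Ioo_mem_nhdsGT hR₀, Ioo_mem_nhdsGT hd,
    Ioo_mem_nhdsGT (div_pos hη hΛpos)] with r hrR hrd hrη
  refine memF_ballDensity hp hD hP hπ hτ hμt hφ.1 hfin φt.continuous hlift hequiv hΛ hrR.1
    hrR.2.le hrd.2.le fun x y hxy => ?_
  rw [← dist_eq_norm]
  refine hunif (lt_of_le_of_lt (by rwa [dist_comm]) ((lt_div_iff₀' hΛpos).1 hrη.2))

end Competitor

/-! ### Averages over balls -/

section BallAverage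

variable {T : Type*} [MetricSpace T] [MeasurableSpace T] (μ : Measure T) {s : ℝ} {h h' : T → ℝ≥0∞}

/-- The average of `h` over the ball of radius `s` centred at `y`. -/
def ballAvg (s : ℝ) (h : T → ℝ≥0∞) (y : T) : ℝ≥0∞ := (∫⁻ x in ball y s, h x ∂μ) / μ (ball y s)

lemma ballAvg_add (hh : Measurable h) (y : T) :
    ballAvg μ s (fun x => h x + h' x) y = ballAvg μ s h y + ballAvg μ s h' y := by
  rw [ballAvg, lintegral_add_left hh, ENNReal.add_div, ballAvg, ballAvg]

lemma ballAvg_const_le (a : ℝ≥0∞) (y : T) : ballAvg μ s (fun _ => a) y ≤ a := by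
  rw [ballAvg, setLIntegral_const]
  exact ENNReal.div_le_of_le_mul le_rfl

variable {μ}

lemma ballAvg_rpow_le {q : ℝ} (hq : 1 < q) (hh : Measurable h) {y : T}
    (h0 : μ (ball y s) ≠ 0) (htop : μ (ball y s) ≠ ⊤) :
    ballAvg μ s h y ^ q ≤ ballAvg μ s (fun x => h x ^ q) y := by
  have hq0 : 0 < q := one_pos.trans hq
  have hHolder := ENNReal.lintegral_mul_le_Lp_mul_Lq (μ.restrict (ball y s))
    (Real.HolderConjugate.conjExponent hq) hh.aemeasurable
    (aemeasurable_const (b := (1 : ℝ≥0∞)))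
  simp only [Pi.mul_apply, mul_one, ENNReal.one_rpow, lintegral_const, one_mul,
    Measure.restrict_apply_univ] at hHolder
  set m := μ (ball y s)
  have hexp : 1 / q.conjExponent * q = q - 1 := by
    have : q - 1 ≠ 0 := by linarith
    rw [Real.conjExponent]
    field_simp
  calc ballAvg μ s h y ^ q
      ≤ ((∫⁻ x in ball y s, h x ^ q ∂μ) ^ (1 / q) * m ^ (1 / q.conjExponent) / m) ^ q := by
        unfold ballAvg; gcongr
    _ = (∫⁻ x in ball y s, h x ^ q ∂μ) * (m ^ (q - 1) / m ^ q) := by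
        rw [ENNReal.div_rpow_of_nonneg _ _ hq0.le, ENNReal.mul_rpow_of_nonneg _ _ hq0.le,
          ← ENNReal.rpow_mul, ← ENNReal.rpow_mul, one_div_mul_cancel hq0.ne', ENNReal.rpow_one,
          hexp, mul_div_assoc]
    _ = ballAvg μ s (fun x => h x ^ q) y := by
        rw [← ENNReal.rpow_sub _ _ h0 htop, sub_sub_cancel_left, ENNReal.rpow_neg_one]; rfl

lemma ballAvg_mono [OpensMeasurableSpace T] {y : T} (hle : ∀ x ∈ ball y s, h x ≤ h' x) :
    ballAvg μ s h y ≤ ballAvg μ s h' y :=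
  ENNReal.div_le_div_right (setLIntegral_mono' measurableSet_ball hle) _

lemma measurable_setLIntegral_ball [OpensMeasurableSpace T] [SecondCountableTopology T]
    (ν : Measure T) [SFinite ν] (hh : Measurable h) (s : ℝ) :
    Measurable fun y => ∫⁻ x in ball y s, h x ∂ν := by
  have hs : MeasurableSet {q : T × T | dist q.2 q.1 < s} :=
    (isOpen_lt (by fun_prop) continuous_const).measurableSet
  simp_rw [← lintegral_indicator measurableSet_ball]
  exact ((hh.comp measurable_snd).indicator hs).lintegral_prod_right'

lemma measurable_ballAvg [OpensMeasurableSpace T] [SecondCountableTopology T] [SFinite μ]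
    (hh : Measurable h) (s : ℝ) : Measurable (ballAvg μ s h) :=
  (measurable_setLIntegral_ball μ hh s).div (measurable_measure_ball μ s)

lemma lintegral_mul_measure_closedBall [OpensMeasurableSpace T] [SecondCountableTopology T]
    [SFinite μ] (ν : Measure T) [SFinite ν] (hh : Measurable h) (R : ℝ) :
    ∫⁻ x, h x * ν (closedBall x R) ∂μ = ∫⁻ y, ∫⁻ x in closedBall y R, h x ∂μ ∂ν := by
  have hs : MeasurableSet {q : T × T | dist q.2 q.1 ≤ R} :=
    (isClosed_le (by fun_prop) continuous_const).measurableSet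
  set f : T × T → ℝ≥0∞ := {q : T × T | dist q.2 q.1 ≤ R}.indicator fun q => h q.1
  calc ∫⁻ x, h x * ν (closedBall x R) ∂μ = ∫⁻ x, ∫⁻ y, f (x, y) ∂ν ∂μ := by
        simp_rw [← setLIntegral_const, ← lintegral_indicator measurableSet_closedBall]; rfl
    _ = ∫⁻ y, ∫⁻ x, f (x, y) ∂μ ∂ν :=
        lintegral_lintegral_swap ((hh.comp measurable_fst).indicator hs).aemeasurable
    _ = ∫⁻ y, ∫⁻ x in closedBall y R, h x ∂μ ∂ν := by
        simp_rw [← lintegral_indicator measurableSet_closedBall, f, indicator, mem_ofPred_eq,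
          mem_closedBall']

lemma inv_le_mul_inv_of_le_mul {a b A : ℝ≥0∞} (h0 : a ≠ 0) (htop : a ≠ ⊤) (h : a ≤ A * b) :
    b⁻¹ ≤ A * a⁻¹ := by
  rw [← div_eq_mul_inv, ENNReal.le_div_iff_mul_le (.inl h0) (.inl htop)]
  calc b⁻¹ * a ≤ A * (b⁻¹ * b) := by rw [mul_left_comm]; gcongr
    _ ≤ A := mul_le_of_le_one_right' (ENNReal.inv_mul_le_one b)

variable [BorelSpace T] [CompactSpace T] [IsFiniteMeasure μ] [μ.IsOpenPosMeasure] {c : ℝ≥0}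

lemma lintegral_ballAvg_le (hD : IsDoubling μ c) (hs : 0 < s)
    (hsd : 2 * s ≤ diam (univ : Set T)) (hh : Measurable h) :
    ∫⁻ y, ballAvg μ s h y ∂μ ≤ (c : ℝ≥0∞) ^ 2 * ∫⁻ x, h x ∂μ := by
  have hdouble (x : T) {A : Set T} (hA : A ⊆ ball x (2 * s)) : μ A ≤ c * μ (ball x s) := by
    simpa using hD.measure_le_of_subset_ball 1 hs (by simpa using hsd) (by simpa using hA)
  calc ∫⁻ y, ballAvg μ s h y ∂μ
      ≤ ∫⁻ y, ∫⁻ x in closedBall y s, h x * (c * (μ (ball x s))⁻¹) ∂μ ∂μ := by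
        refine lintegral_mono fun y => ?_
        rw [ballAvg, div_eq_mul_inv, ← lintegral_mul_const _ hh]
        refine (setLIntegral_mono' measurableSet_ball fun x hx => ?_).trans
          (lintegral_mono_set ball_subset_closedBall)
        gcongr
        exact inv_le_mul_inv_of_le_mul (measure_ball_pos μ x hs).ne' (measure_ne_top _ _)
          (hdouble y (ball_subset_ball' (by linarith [mem_ball.1 hx])))
    _ = ∫⁻ x, h x * (c * (μ (ball x s))⁻¹) * μ (closedBall x s) ∂μ :=
        (lintegral_mul_measure_closedBall μ
          (hh.mul ((measurable_measure_ball μ s).inv.const_mul _)) s).symm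
    _ ≤ ∫⁻ x, (c : ℝ≥0∞) ^ 2 * h x ∂μ := by
        refine lintegral_mono fun x => ?_
        calc h x * (c * (μ (ball x s))⁻¹) * μ (closedBall x s)
            ≤ h x * (c * (μ (ball x s))⁻¹) * (c * μ (ball x s)) := by
              gcongr
              exact hdouble x (closedBall_subset_ball (by linarith))
          _ = (c : ℝ≥0∞) ^ 2 * h x * ((μ (ball x s))⁻¹ * μ (ball x s)) := by ring
          _ ≤ (c : ℝ≥0∞) ^ 2 * h x := mul_le_of_le_one_right' (ENNReal.inv_mul_le_one _)
    _ = (c : ℝ≥0∞) ^ 2 * ∫⁻ x, h x ∂μ := lintegral_const_mul _ hh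

lemma lintegral_ballAvg_rpow_le (hD : IsDoubling μ c) {q : ℝ} (hq : 1 < q) (hs : 0 < s)
    (hsd : 2 * s ≤ diam (univ : Set T)) (hh : Measurable h) :
    ∫⁻ y, ballAvg μ s h y ^ q ∂μ ≤ (c : ℝ≥0∞) ^ 2 * ∫⁻ x, h x ^ q ∂μ :=
  (lintegral_mono fun y => ballAvg_rpow_le hq hh (measure_ball_pos μ y hs).ne'
    (measure_ne_top _ _)).trans (lintegral_ballAvg_le hD hs hsd (hh.pow_const q))

lemma lintegral_mul_ballDensity_le (hD : IsDoubling μ c) (ν : Measure T) [SFinite ν]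
    {l : ℕ} {r R : ℝ} (hr : 0 < r) (hR : 0 < R) (hRr : 3 * R ≤ 2 ^ l * r)
    (hrd : 2 ^ l * r ≤ diam (univ : Set T)) (hh : Measurable h) :
    ∫⁻ x, h x * ballDensity μ ν R r x ∂μ ≤ (c : ℝ≥0∞) ^ l * ∫⁻ y, ballAvg μ (2 * R) h y ∂ν :=
  calc ∫⁻ x, h x * ballDensity μ ν R r x ∂μ
      = ∫⁻ x, h x * (μ (ball x r))⁻¹ * ν (closedBall x R) ∂μ := by
        simp_rw [ballDensity, div_eq_mul_inv, mul_assoc, mul_comm (ν _)]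
    _ = ∫⁻ y, ∫⁻ x in closedBall y R, h x * (μ (ball x r))⁻¹ ∂μ ∂ν :=
        lintegral_mul_measure_closedBall ν (hh.mul (measurable_measure_ball μ r).inv) R
    _ ≤ ∫⁻ y, (c : ℝ≥0∞) ^ l * ballAvg μ (2 * R) h y ∂ν := by
        refine lintegral_mono fun y => ?_
        rw [ballAvg, div_eq_mul_inv, mul_left_comm, ← lintegral_mul_const _ hh]
        refine (setLIntegral_mono' measurableSet_closedBall fun x hx => ?_).trans
          (lintegral_mono_set (closedBall_subset_ball (by linarith)))
        gcongr
        exact inv_le_mul_inv_of_le_mul (measure_ball_pos μ y (by positivity)).ne'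
          (measure_ne_top _ _) (hD.measure_le_of_subset_ball l hr hrd
            (ball_subset_ball' (by linarith [mem_closedBall'.1 hx])))
    _ = (c : ℝ≥0∞) ^ l * ∫⁻ y, ballAvg μ (2 * R) h y ∂ν :=
        lintegral_const_mul _ (measurable_ballAvg hh _)

end BallAverage

/-! ### Approximation by averages in `L^q` -/

lemma exists_forall_le_two_inv_pow_mul {α : Type*} [MeasurableSpace α] {ν : Measure α} {q : ℝ}
    (hq : 0 < q) {D : ℕ → α → ℝ≥0∞} (hD : ∀ n, Measurable (D n))
    (hint : ∀ n, ∫⁻ x, D n x ^ q ∂ν ≤ 2⁻¹ ^ n / ((2 : ℝ≥0∞) ^ n) ^ q) :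
    ∃ G : α → ℝ≥0∞, Measurable G ∧ ∫⁻ x, G x ^ q ∂ν < ⊤ ∧ ∀ n x, D n x ≤ 2⁻¹ ^ n * G x := by
  refine ⟨fun x => (∑' n, (2 ^ n * D n x) ^ q) ^ q⁻¹,
    (Measurable.tsum fun n => ((hD n).const_mul _).pow_const q).pow_const _, ?_, fun n x => ?_⟩
  · calc ∫⁻ x, ((∑' n, (2 ^ n * D n x) ^ q) ^ q⁻¹) ^ q ∂ν
        = ∑' n, ∫⁻ x, (2 ^ n * D n x) ^ q ∂ν := by
          simp_rw [ENNReal.rpow_inv_rpow hq.ne']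
          exact lintegral_tsum fun n => (((hD n).const_mul _).pow_const q).aemeasurable
      _ ≤ ∑' n : ℕ, 2⁻¹ ^ n := by
          refine ENNReal.tsum_le_tsum fun n => ?_
          simp_rw [ENNReal.mul_rpow_of_nonneg _ _ hq.le]
          rw [lintegral_const_mul' _ _ (ENNReal.rpow_ne_top_of_nonneg hq.le (by simp))]
          exact (mul_le_mul_right (hint n) _).trans ENNReal.mul_div_le
      _ < ⊤ := by simp [ENNReal.tsum_geometric, ENNReal.one_sub_inv_two]
  · calc D n x = 2⁻¹ ^ n * ((2 ^ n * D n x) ^ q) ^ q⁻¹ := by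
          rw [ENNReal.rpow_rpow_inv hq.ne', ← mul_assoc, ← mul_pow,
            ENNReal.inv_mul_cancel two_ne_zero ENNReal.ofNat_ne_top, one_pow, one_mul]
      _ ≤ 2⁻¹ ^ n * (∑' n, (2 ^ n * D n x) ^ q) ^ q⁻¹ := by
          gcongr
          exact ENNReal.le_tsum (f := fun n => (2 ^ n * D n x) ^ q) n

section Approximation

variable {T : Type*} [MetricSpace T] [MeasurableSpace T] [BorelSpace T] {μ : Measure T}
  {h : T → ℝ≥0∞} {q : ℝ}

lemma ofReal_sub_toNNReal_add_le (a b : ℝ) :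
    (ENNReal.ofReal a - b.toNNReal) + (b.toNNReal - ENNReal.ofReal a) ≤ ‖a - b‖ₑ := by
  have hsub (a b : ℝ) : ENNReal.ofReal a - ENNReal.ofReal b ≤ ENNReal.ofReal (a - b) := by
    rw [tsub_le_iff_right]
    simpa using ENNReal.ofReal_add_le (p := a - b) (q := b)
  change (ENNReal.ofReal a - ENNReal.ofReal b) + (ENNReal.ofReal b - ENNReal.ofReal a) ≤ _
  rw [Real.enorm_eq_ofReal_abs]
  rcases le_total a b with hab | hab
  · rw [tsub_eq_zero_of_le (ENNReal.ofReal_le_ofReal hab), zero_add, abs_sub_comm,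
      abs_of_nonneg (sub_nonneg.2 hab)]
    exact hsub b a
  · rw [tsub_eq_zero_of_le (ENNReal.ofReal_le_ofReal hab), add_zero,
      abs_of_nonneg (sub_nonneg.2 hab)]
    exact hsub a b

lemma exists_continuous_lintegral_rpow_le [IsFiniteMeasure μ] (hq : 0 < q) (hh : Measurable h)
    (hint : ∫⁻ x, h x ^ q ∂μ < ⊤) {ε : ℝ≥0∞} (hε : ε ≠ 0) :
    ∃ g : T → ℝ≥0, Continuous g ∧ ∫⁻ x, ((h x - g x) + (g x - h x)) ^ q ∂μ ≤ ε := by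
  have hq0 : ENNReal.ofReal q ≠ 0 := (ENNReal.ofReal_pos.2 hq).ne'
  have hmem : MemLp (fun x => (h x).toReal) (ENNReal.ofReal q) μ := by
    refine ⟨hh.ennreal_toReal.aestronglyMeasurable, ?_⟩
    rw [eLpNorm_lt_top_iff_lintegral_rpow_enorm_lt_top hq0 ENNReal.ofReal_ne_top,
      ENNReal.toReal_ofReal hq.le]
    refine (lintegral_mono fun x => ENNReal.rpow_le_rpow ?_ hq.le).trans_lt hint
    rw [Real.enorm_of_nonneg ENNReal.toReal_nonneg]
    exact ENNReal.ofReal_toReal_le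
  have hfinite : ∀ᵐ x ∂μ, h x ≠ ⊤ := by
    filter_upwards [ae_lt_top (hh.pow_const q) hint.ne] with x hx
    rintro he
    simp [he, hq] at hx
  obtain ⟨g, hg, -⟩ := hmem.exists_boundedContinuous_eLpNorm_sub_le ENNReal.ofReal_ne_top
    (ε := ε ^ (1 / q)) (by simp [hε, hq.le])
  rw [eLpNorm_eq_lintegral_rpow_enorm_toReal hq0 ENNReal.ofReal_ne_top,
    ENNReal.toReal_ofReal hq.le, ENNReal.rpow_le_rpow_iff (by positivity)] at hg
  refine ⟨fun x => (g x).toNNReal, continuous_real_toNNReal.comp g.continuous,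
    (lintegral_mono_ae ?_).trans hg⟩
  filter_upwards [hfinite] with x hx
  have hle := ofReal_sub_toNNReal_add_le (h x).toReal (g x)
  rw [ENNReal.ofReal_toReal hx] at hle
  exact ENNReal.rpow_le_rpow hle hq.le

lemma ballAvg_le_add_add_ballAvg {s : ℝ} {y : T} {η : ℝ≥0} {D : T → ℝ≥0∞} {g : T → ℝ≥0}
    (hle : ∀ x, h x ≤ g x + D x) (hge : g y ≤ h y + D y) (hg : ∀ x ∈ ball y s, g x ≤ g y + η) :
    ballAvg μ s h y ≤ h y + η + (D y + ballAvg μ s D y) :=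
  calc ballAvg μ s h y ≤ ballAvg μ s (fun x => (h y + D y + η) + D x) y := by
        refine ballAvg_mono fun x hx => (hle x).trans ?_
        gcongr
        calc (g x : ℝ≥0∞) ≤ g y + η := mod_cast hg x hx
          _ ≤ h y + D y + η := by gcongr
    _ = ballAvg μ s (fun _ => h y + D y + η) y + ballAvg μ s D y :=
        ballAvg_add μ measurable_const y
    _ ≤ h y + D y + η + ballAvg μ s D y := by gcongr; exact ballAvg_const_le μ _ y
    _ = h y + η + (D y + ballAvg μ s D y) := by ring

variable [CompactSpace T] [IsFiniteMeasure μ] [μ.IsOpenPosMeasure] {c : ℝ≥0}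

lemma lintegral_add_ballAvg_rpow_le (hD : IsDoubling μ c) (hq : 1 < q) {s : ℝ} (hs : 0 < s)
    (hsd : 2 * s ≤ diam (univ : Set T)) (hh : Measurable h) :
    ∫⁻ y, (h y + ballAvg μ s h y) ^ q ∂μ ≤
      2 ^ (q - 1) * (1 + (c : ℝ≥0∞) ^ 2) * ∫⁻ y, h y ^ q ∂μ :=
  calc ∫⁻ y, (h y + ballAvg μ s h y) ^ q ∂μ
      ≤ ∫⁻ y, 2 ^ (q - 1) * (h y ^ q + ballAvg μ s h y ^ q) ∂μ :=
        lintegral_mono fun y => ENNReal.rpow_add_le_mul_rpow_add_rpow _ _ hq.le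
    _ = 2 ^ (q - 1) * (∫⁻ y, h y ^ q ∂μ + ∫⁻ y, ballAvg μ s h y ^ q ∂μ) := by
        rw [lintegral_const_mul' _ _
          (ENNReal.rpow_ne_top_of_nonneg (by linarith) ENNReal.ofNat_ne_top),
          lintegral_add_left (hh.pow_const q)]
    _ ≤ 2 ^ (q - 1) * (∫⁻ y, h y ^ q ∂μ + (c : ℝ≥0∞) ^ 2 * ∫⁻ y, h y ^ q ∂μ) := by
        gcongr
        exact lintegral_ballAvg_rpow_le hD hq hs hsd hh
    _ = 2 ^ (q - 1) * (1 + (c : ℝ≥0∞) ^ 2) * ∫⁻ y, h y ^ q ∂μ := by ring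

lemma eventually_exists_ballAvg_le [Nontrivial T] (hD : IsDoubling μ c) (hq : 1 < q)
    (hh : Measurable h) (hint : ∫⁻ x, h x ^ q ∂μ < ⊤) {ε : ℝ≥0∞} (hε : ε ≠ 0) {η : ℝ≥0}
    (hη : 0 < η) :
    ∀ᶠ s in 𝓝[>] 0, ∃ D : T → ℝ≥0∞, Measurable D ∧ (∀ y, ballAvg μ s h y ≤ h y + η + D y) ∧
      ∫⁻ x, D x ^ q ∂μ ≤ ε := by
  set A : ℝ≥0∞ := 2 ^ (q - 1) * (1 + (c : ℝ≥0∞) ^ 2)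
  have hA : A ≠ ⊤ := ENNReal.mul_ne_top
    (ENNReal.rpow_ne_top_of_nonneg (by linarith) ENNReal.ofNat_ne_top) (by finiteness)
  obtain ⟨g, hg, hgε⟩ := exists_continuous_lintegral_rpow_le (one_pos.trans hq) hh hint
    (ENNReal.div_ne_zero.2 ⟨hε, hA⟩)
  obtain ⟨s₁, hs₁, hunif⟩ := Metric.uniformContinuous_iff.1
    (CompactSpace.uniformContinuous_of_continuous hg) η hη
  have hd : 0 < diam (univ : Set T) := diam_pos nontrivial_univ isCompact_univ.isBounded
  have hgm : Measurable fun x => (g x : ℝ≥0∞) := hg.measurable.coe_nnreal_ennreal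
  have hDm := (hh.sub hgm).add (hgm.sub hh)
  filter_upwards [Ioo_mem_nhdsGT hs₁, Ioo_mem_nhdsGT (half_pos hd)] with s hs hsd
  refine ⟨_, hDm.add (measurable_ballAvg (μ := μ) hDm s), fun y => ?_, ?_⟩
  · refine ballAvg_le_add_add_ballAvg (g := g) (fun x => ?_) ?_ fun x hx => ?_
    · exact le_add_tsub.trans (add_le_add_right le_self_add _)
    · exact le_add_tsub.trans (add_le_add_right le_add_self _)
    · have hdist := hunif ((mem_ball.1 hx).trans hs.2)
      rw [NNReal.dist_eq, abs_lt] at hdist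
      exact_mod_cast (sub_lt_iff_lt_add'.1 hdist.2).le
  · calc _ ≤ A * _ := lintegral_add_ballAvg_rpow_le hD hq hs.1 (by linarith [hsd.2]) hDm
      _ ≤ A * (ε / A) := by gcongr; exact hgε
      _ ≤ ε := ENNReal.mul_div_le

lemma exists_seq_ballAvg_le [Nontrivial T] (hD : IsDoubling μ c) (hq : 1 < q)
    (hh : Measurable h) (hint : ∫⁻ x, h x ^ q ∂μ < ⊤) :
    ∃ (s : ℕ → ℝ) (G : T → ℝ≥0∞), Tendsto s atTop (𝓝[>] 0) ∧ Measurable G ∧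
      ∫⁻ x, G x ^ q ∂μ < ⊤ ∧ ∀ n y, ballAvg μ (s n) h y ≤ h y + 2⁻¹ ^ n + 2⁻¹ ^ n * G y := by
  have hq0 : 0 < q := one_pos.trans hq
  have hscale (n : ℕ) : ∃ s ∈ Ioo 0 (1 / ((n : ℝ) + 1)), ∃ D : T → ℝ≥0∞, Measurable D ∧
      (∀ y, ballAvg μ s h y ≤ h y + ((2⁻¹ ^ n : ℝ≥0) : ℝ≥0∞) + D y) ∧
      ∫⁻ x, D x ^ q ∂μ ≤ 2⁻¹ ^ n / ((2 : ℝ≥0∞) ^ n) ^ q := by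
    have hball := eventually_exists_ballAvg_le hD hq hh hint (η := 2⁻¹ ^ n)
      (ε := 2⁻¹ ^ n / ((2 : ℝ≥0∞) ^ n) ^ q) (ENNReal.div_ne_zero.2
        ⟨by simp, ENNReal.rpow_ne_top_of_nonneg hq0.le (by simp)⟩) (by positivity)
    have hIoo : ∀ᶠ s in 𝓝[>] (0 : ℝ), s ∈ Ioo 0 (1 / ((n : ℝ) + 1)) :=
      Ioo_mem_nhdsGT (by positivity)
    exact (hIoo.and hball).exists
  choose s hs D hDm hle hDint using hscale
  obtain ⟨G, hG, hGint, hDG⟩ := exists_forall_le_two_inv_pow_mul hq0 hDm hDint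
  refine ⟨s, G, tendsto_nhdsWithin_iff.2 ⟨?_, Eventually.of_forall fun n => (hs n).1⟩, hG, hGint,
    fun n y => (hle n y).trans (add_le_add ?_ (hDG n y))⟩
  · exact squeeze_zero (fun n => (hs n).1.le) (fun n => (hs n).2.le)
      tendsto_one_div_add_atTop_nhds_zero_nat
  · rw [ENNReal.coe_pow, ENNReal.coe_inv two_ne_zero, ENNReal.coe_ofNat]

end Approximation

/-! ### Fuglede's lemma and weak admissibility -/

lemma le_mul_lintegral_of_eventually_le {α : Type*} [MeasurableSpace α] {ν : Measure α}
    [IsFiniteMeasure ν] {f : ℕ → α → ℝ≥0∞} {h G : α → ℝ≥0∞} {a K : ℝ≥0∞} (hK : K ≠ ⊤)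
    (hh : Measurable h) (hG : Measurable G) (hGint : ∫⁻ x, G x ∂ν ≠ ⊤)
    (hf : ∀ n x, f n x ≤ h x + 2⁻¹ ^ n + 2⁻¹ ^ n * G x)
    (ha : ∀ᶠ n in atTop, a ≤ K * ∫⁻ x, f n x ∂ν) : a ≤ K * ∫⁻ x, h x ∂ν := by
  have h0 : Tendsto (fun n : ℕ => (2 : ℝ≥0∞)⁻¹ ^ n) atTop (𝓝 0) :=
    ENNReal.tendsto_pow_atTop_nhds_zero_of_lt_one (by simp)
  have hlim : Tendsto
      (fun n : ℕ => K * (∫⁻ x, h x ∂ν + 2⁻¹ ^ n * ν univ + 2⁻¹ ^ n * ∫⁻ x, G x ∂ν)) atTop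
      (𝓝 (K * (∫⁻ x, h x ∂ν + 0 * ν univ + 0 * ∫⁻ x, G x ∂ν))) :=
    ENNReal.Tendsto.const_mul ((tendsto_const_nhds.add
      (ENNReal.Tendsto.mul_const h0 (.inr (measure_ne_top ν _)))).add
      (ENNReal.Tendsto.mul_const h0 (.inr hGint))) (.inr hK)
  rw [zero_mul, zero_mul, add_zero, add_zero] at hlim
  refine ge_of_tendsto hlim (ha.mono fun n hn => hn.trans ?_)
  gcongr
  calc ∫⁻ x, f n x ∂ν ≤ ∫⁻ x, h x + 2⁻¹ ^ n + 2⁻¹ ^ n * G x ∂ν := lintegral_mono (hf n)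
    _ = ∫⁻ x, h x ∂ν + 2⁻¹ ^ n * ν univ + 2⁻¹ ^ n * ∫⁻ x, G x ∂ν := by
        rw [lintegral_add_left (hh.add_const _), lintegral_add_left hh, lintegral_const,
          lintegral_const_mul _ hG]

section Surfaces

variable {T : Type*} [MetricSpace T] [MeasurableSpace T] {μ : Measure T} {S : Set T} {x₀ : T}
  {α₀ : Path x₀ x₀}

lemma surfModOf_mono {q : ℝ} {𝒮 𝒮' : Set (Set T)} (h : 𝒮 ⊆ 𝒮') :
    surfModOf μ q 𝒮 ≤ surfModOf μ q 𝒮' :=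
  iInf_mono fun _ => iInf_mono' fun hρ => ⟨⟨hρ.1, fun S hS => hρ.2 S (h hS)⟩, le_rfl⟩

lemma codimH_lt_top_of_mem_surfaces (hS : S ∈ Surfaces μ x₀ α₀) : codimH μ S < ⊤ := by
  obtain ⟨φ, -, rfl, hfin⟩ := hS
  exact hfin

variable [BorelSpace T]

lemma measurableSet_of_mem_surfaces (hS : S ∈ Surfaces μ x₀ α₀) : MeasurableSet S := by
  obtain ⟨φ, hφ, rfl, -⟩ := hS
  exact (isClosed_singleton.preimage hφ.1).measurableSet

section Choquet

variable [Nonempty T] {g : T → ℝ≥0∞}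

lemma choquetIntegral_const_mul (hS : MeasurableSet S) (hfin : codimH μ S < ⊤) (hg : Measurable g)
    (a : ℝ≥0∞) : choquetIntegral μ S (fun x => a * g x) = a * choquetIntegral μ S g := by
  rw [choquetIntegral_eq_lintegral μ hS hfin (hg.const_mul a),
    choquetIntegral_eq_lintegral μ hS hfin hg, lintegral_const_mul a hg]

lemma one_le_choquetIntegral_div_mul (hS : MeasurableSet S) (hfin : codimH μ S < ⊤)
    (hg : Measurable g) {a C : ℝ≥0∞} (ha0 : 0 < a) (ha : a < ⊤)
    (hle : a ≤ C * choquetIntegral μ S g) : 1 ≤ choquetIntegral μ S fun x => C / a * g x := by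
  rw [choquetIntegral_const_mul hS hfin hg, div_eq_mul_inv, mul_right_comm, ← div_eq_mul_inv,
    ENNReal.le_div_iff_mul_le (.inl ha0.ne') (.inl ha.ne), one_mul]
  exact hle

/-- The functions `ε * G` are all admissible for this family. -/
lemma surfModOf_setOf_choquetIntegral_eq_top {q : ℝ} (hq : 0 < q) {G : T → ℝ≥0∞}
    (hG : Measurable G) (hint : ∫⁻ x, G x ^ q ∂μ < ⊤) :
    surfModOf μ q
      {S | MeasurableSet S ∧ codimH μ S < ⊤ ∧ choquetIntegral μ S G = ⊤} = 0 := by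
  set 𝒮 := {S | MeasurableSet S ∧ codimH μ S < ⊤ ∧ choquetIntegral μ S G = ⊤}
  have hle (n : ℕ) : surfModOf μ q 𝒮 ≤ (2⁻¹ ^ n) ^ q * ∫⁻ x, G x ^ q ∂μ := by
    have hadm : ∀ S ∈ 𝒮, 1 ≤ choquetIntegral μ S fun x => 2⁻¹ ^ n * G x := by
      rintro S ⟨hS, hfin, htop⟩
      rw [choquetIntegral_const_mul hS hfin hG, htop, ENNReal.mul_top (by simp)]
      exact le_top
    refine (iInf₂_le _ ⟨hG.const_mul _, hadm⟩).trans_eq ?_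
    simp_rw [ENNReal.mul_rpow_of_nonneg _ _ hq.le]
    exact lintegral_const_mul' _ _ (ENNReal.rpow_ne_top_of_nonneg hq.le (by finiteness))
  have hlim : Tendsto (fun n : ℕ => ((2 : ℝ≥0∞)⁻¹ ^ n) ^ q) atTop (𝓝 (0 ^ q)) :=
    ((ENNReal.continuous_rpow_const (y := q)).tendsto 0).comp
      (ENNReal.tendsto_pow_atTop_nhds_zero_of_lt_one (by simp))
  rw [ENNReal.zero_rpow_of_pos hq] at hlim
  refine nonpos_iff_eq_zero.1 ?_
  rw [← zero_mul (∫⁻ x, G x ^ q ∂μ)]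
  exact ge_of_tendsto' (ENNReal.Tendsto.mul_const hlim (.inr hint.ne)) hle

end Choquet

section FirstVariation

variable [CompactSpace T] [IsFiniteMeasure μ] [μ.IsOpenPosMeasure] {Tt : Type*}
  [MetricSpace Tt] [MeasurableSpace Tt] {μt : Measure Tt} {π : Tt → T} {τ : Tt → Tt}
  {c K : ℝ≥0} {Λ R₀ p : ℝ} {l : ℕ} {h : T → ℝ≥0∞} {a : ℝ≥0∞}

lemma le_lintegral_ballAvg_of_memF (hp : 0 < p) (hD : IsDoubling μ c) {ν : Measure T}
    [IsFiniteMeasure ν] {k : ℝ≥0} {r R : ℝ} (hr : 0 < r) (hR : 0 < R) (hRr : 3 * R ≤ 2 ^ l * r)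
    (hrd : 2 ^ l * r ≤ diam (univ : Set T)) (hh : Measurable h)
    (ha : ∀ ρ : T → ℝ≥0∞, MemF π τ μt p ρ → ∫⁻ x, ρ x ^ p ∂μ < ⊤ → a ≤ ∫⁻ x, h x * ρ x ∂μ)
    (hmem : MemF π τ μt p fun x => k * ballDensity μ ν R r x) :
    a ≤ k * (c : ℝ≥0∞) ^ l * ∫⁻ y, ballAvg μ (2 * R) h y ∂ν := by
  obtain ⟨M, hM⟩ := exists_forall_ballDensity_le (μ := μ) (ν := ν) R hr
  have hint : ∫⁻ x, (k * ballDensity μ ν R r x) ^ p ∂μ < ⊤ := by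
    rw [← setLIntegral_univ]
    exact setLIntegral_rpow_lt_top_of_le hp.le .univ (measure_lt_top _ _) (b := k * M)
      (by finiteness) fun x _ => mul_le_mul_right (hM x) _
  calc a ≤ ∫⁻ x, h x * (k * ballDensity μ ν R r x) ∂μ := ha _ hmem hint
    _ = k * ∫⁻ x, h x * ballDensity μ ν R r x ∂μ := by
        simp_rw [mul_left_comm (h _)]
        exact lintegral_const_mul' _ _ ENNReal.coe_ne_top
    _ ≤ k * ((c : ℝ≥0∞) ^ l * ∫⁻ y, ballAvg μ (2 * R) h y ∂ν) := by
        gcongr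
        exact lintegral_mul_ballDensity_le hD ν hr hR hRr hrd hh
    _ = k * (c : ℝ≥0∞) ^ l * ∫⁻ y, ballAvg μ (2 * R) h y ∂ν := (mul_assoc _ _ _).symm

variable [BorelSpace Tt] [Nontrivial T] [LocallyPathConnectedSpace T]

lemma eventually_le_lintegral_ballAvg (hp : 0 < p) (hD : IsDoubling μ c)
    (hP : LocalPoincare μ K Λ R₀) (hΛ : 1 ≤ Λ) (hR₀ : 0 < R₀) (hl : 3 * Λ ≤ 2 ^ l)
    (hπ : CoverSetup π) (hτ : IsDeck π x₀ α₀ τ) (hμt : IsLiftedMeasure π μ μt)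
    (hh : Measurable h) (ha : ∀ ρ : T → ℝ≥0∞, MemF π τ μt p ρ → ∫⁻ x, ρ x ^ p ∂μ < ⊤ →
      a ≤ ∫⁻ x, h x * ρ x ∂μ) (hS : S ∈ Surfaces μ x₀ α₀) :
    ∀ᶠ s in 𝓝[>] (0 : ℝ), a ≤ gradConst c K * (c : ℝ≥0∞) ^ l *
      ∫⁻ y, ballAvg μ s h y ∂surfaceMeasure μ S := by
  have hfinite := isFiniteMeasure_surfaceMeasure (measurableSet_of_mem_surfaces hS)
    (codimH_lt_top_of_mem_surfaces hS)
  obtain ⟨φ, hφ, rfl, hfin⟩ := hS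
  have hΛpos : 0 < Λ := one_pos.trans_le hΛ
  have hd : 0 < diam (univ : Set T) := diam_pos nontrivial_univ isCompact_univ.isBounded
  have hlim : Tendsto (fun s : ℝ => s / (2 * Λ)) (𝓝 0) (𝓝 0) :=
    (continuous_id.div_const (2 * Λ)).tendsto' 0 0 (by simp)
  have hscale : Tendsto (fun s : ℝ => s / (2 * Λ)) (𝓝[>] (0 : ℝ)) (𝓝[>] (0 : ℝ)) :=
    tendsto_nhdsWithin_iff.2 ⟨hlim.mono_left nhdsWithin_le_nhds,
      eventually_nhdsWithin_of_forall fun s hs => div_pos (mem_Ioi.1 hs) (by positivity)⟩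
  filter_upwards [
    hscale.eventually (eventually_memF_ballDensity hp hD hP hΛ hR₀ hπ hτ hμt hφ hfin),
    hscale.eventually (Ioo_mem_nhdsGT (div_pos hd (by positivity : (0 : ℝ) < 2 ^ l)))]
    with s hmem hsd
  obtain ⟨r, rfl⟩ : ∃ r, s = 2 * (Λ * r) := ⟨s / (2 * Λ), by field_simp⟩
  rw [show 2 * (Λ * r) / (2 * Λ) = r by field_simp] at hmem hsd
  obtain ⟨hr, hrd⟩ := hsd
  exact le_lintegral_ballAvg_of_memF hp hD hr (mul_pos hΛpos hr)
    (by rw [← mul_assoc]; gcongr) ((lt_div_iff₀' (by positivity)).1 hrd).le hh ha hmem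

theorem exists_surfModOf_eq_zero_forall_le_choquetIntegral (hp : 0 < p) (hD : IsDoubling μ c)
    (hP : LocalPoincare μ K Λ R₀) (hΛ : 1 ≤ Λ) (hR₀ : 0 < R₀) (hl : 3 * Λ ≤ 2 ^ l)
    (hπ : CoverSetup π) (hτ : IsDeck π x₀ α₀ τ) (hμt : IsLiftedMeasure π μ μt) {q : ℝ}
    (hq : 1 < q) (hh : Measurable h) (hint : ∫⁻ x, h x ^ q ∂μ < ⊤)
    (ha : ∀ ρ : T → ℝ≥0∞, MemF π τ μt p ρ → ∫⁻ x, ρ x ^ p ∂μ < ⊤ →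
      a ≤ ∫⁻ x, h x * ρ x ∂μ) :
    ∃ 𝒩 ⊆ Surfaces μ x₀ α₀, surfModOf μ q 𝒩 = 0 ∧ ∀ S ∈ Surfaces μ x₀ α₀ \ 𝒩,
      a ≤ gradConst c K * (c : ℝ≥0∞) ^ l * choquetIntegral μ S h := by
  obtain ⟨s, G, hs, hG, hGint, hle⟩ := exists_seq_ballAvg_le hD hq hh hint
  refine ⟨{S ∈ Surfaces μ x₀ α₀ | choquetIntegral μ S G = ⊤}, sep_subset _ _, ?_, ?_⟩
  · refine nonpos_iff_eq_zero.1 ((surfModOf_mono fun S hS => ?_).trans_eq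
      (surfModOf_setOf_choquetIntegral_eq_top (one_pos.trans hq) hG hGint))
    exact ⟨measurableSet_of_mem_surfaces hS.1, codimH_lt_top_of_mem_surfaces hS.1, hS.2⟩
  rintro S ⟨hS, hSN⟩
  have hSm := measurableSet_of_mem_surfaces hS
  have hfin := codimH_lt_top_of_mem_surfaces hS
  have hGtop : choquetIntegral μ S G ≠ ⊤ := fun htop => hSN ⟨hS, htop⟩
  rw [choquetIntegral_eq_lintegral μ hSm hfin hG] at hGtop
  rw [choquetIntegral_eq_lintegral μ hSm hfin hh]
  have hfinite := isFiniteMeasure_surfaceMeasure hSm hfin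
  exact le_mul_lintegral_of_eventually_le (by finiteness) hh hG hGtop hle
    (hs.eventually (eventually_le_lintegral_ballAvg hp hD hP hΛ hR₀ hl hπ hτ hμt hh ha hS))

end FirstVariation

end Surfaces

lemma isUpperGradient_const_of_lipschitzWith {X Y : Type*} [PseudoMetricSpace X]
    [PseudoEMetricSpace Y] {f : X → Y} {L : ℝ≥0} (hf : LipschitzWith L f) :
    IsUpperGradient f fun _ => (L : ℝ≥0∞) := fun γ =>
  calc edist (f γ.start) (f γ.finish) ≤ L * edist γ.start γ.finish := hf _ _
    _ ≤ L * edist γ.a γ.b := by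
        gcongr
        have := γ.lip (left_mem_Icc.2 γ.hab) (right_mem_Icc.2 γ.hab)
        rwa [ENNReal.coe_one, one_mul] at this
    _ = γ.integral fun _ => (L : ℝ≥0∞) := by
        rw [UPath.integral, setLIntegral_const, Real.volume_Icc, edist_comm, edist_dist,
          Real.dist_eq, abs_of_nonneg (sub_nonneg.2 γ.hab)]

lemma cap_lt_top {T : Type*} [MetricSpace T] [MeasurableSpace T] {μ : Measure T}
    [IsFiniteMeasure μ] {p : ℝ} (hp : 0 < p) {x₀ : T} {α₀ : Path x₀ x₀}
    {f : T → UnitAddCircle} (hf : DegOneLip x₀ α₀ f) : cap μ p x₀ α₀ < ⊤ := by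
  obtain ⟨L, hL⟩ := hf.1
  have hgrad : IsWeakUpperGradient μ p f fun _ => (L : ℝ≥0∞) :=
    (isUpperGradient_const_of_lipschitzWith hL).isWeakUpperGradient hp
  refine ((iInf₂_le f hf).trans (iInf₂_le _ ⟨measurable_const, hgrad⟩)).trans_lt ?_
  rw [lintegral_const]
  exact ENNReal.mul_lt_top (ENNReal.rpow_lt_top_of_nonneg hp.le ENNReal.coe_ne_top)
    (measure_lt_top _ _)

lemma IsDoubling.ne_top {T : Type*} [MetricSpace T] [MeasurableSpace T] [CompactSpace T]
    [Nontrivial T] {μ : Measure T} {C : ℝ≥0∞} (hD : IsDoubling μ C) : C ≠ ⊤ := by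
  have hd : 0 < diam (univ : Set T) := diam_pos nontrivial_univ isCompact_univ.isBounded
  obtain ⟨x⟩ := (inferInstance : Nonempty T)
  have hpos := (hD x (diam (univ : Set T) / 4) (by positivity) (by linarith)).1
  have hlt := (hD x (diam (univ : Set T) / 2) (by positivity) (by linarith)).2.2
  rw [show 2 * (diam (univ : Set T) / 4) = diam (univ : Set T) / 2 by ring] at hpos
  rintro rfl
  simp [ENNReal.top_mul hpos.ne'] at hlt

lemma exists_pow_two_mul_ge_one (t : ℝ) : ∃ m : ℕ, 0 < t → 1 ≤ 2 ^ m * t := by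
  obtain ⟨m, hm⟩ := pow_unbounded_of_one_lt t⁻¹ one_lt_two
  exact ⟨m, fun ht => ((inv_lt_iff_one_lt_mul₀ ht).1 hm).le⟩

end Duality

open Duality in
theorem statement10_general (Cμ : ℝ≥0∞) (CP lP : ℝ) :
    ∃ C : ℝ≥0∞, 0 < C ∧ C < ⊤ ∧
      ∀ (T : Type*) [MetricSpace T] [MeasurableSpace T] [BorelSpace T] [CompactSpace T]
        [Nontrivial T] (Tt : Type*) [MetricSpace Tt] [MeasurableSpace Tt] [BorelSpace Tt]
        (μ : Measure T) (μt : Measure Tt) (x₀ : T) (α₀ : Path x₀ x₀) (π : Tt → T) (τ : Tt → Tt),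
        IsDoubling μ Cμ → SupportsPoincare μ CP lP → CoverSetup π → IsDeck π x₀ α₀ τ →
        IsLiftedMeasure π μ μt →
        ∀ p q : ℝ, 0 < p → 1 < q → ∀ h : T → ℝ≥0∞, Measurable h → ∫⁻ x, h x ^ q ∂μ < ⊤ →
          ∀ a : ℝ≥0∞,
            (∀ ρ : T → ℝ≥0∞, MemF π τ μt p ρ → ∫⁻ x, ρ x ^ p ∂μ < ⊤ →
              a ≤ ∫⁻ x, h x * ρ x ∂μ) →
            ∃ 𝒩 ⊆ Surfaces μ x₀ α₀, surfModOf μ q 𝒩 = 0 ∧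
              (∀ S ∈ Surfaces μ x₀ α₀ \ 𝒩, a ≤ C * choquetIntegral μ S h) ∧
              (0 < a → a < ⊤ → ∀ S ∈ Surfaces μ x₀ α₀ \ 𝒩,
                1 ≤ choquetIntegral μ S fun x => C / a * h x) := by
  obtain ⟨m, hm⟩ := exists_pow_two_mul_ge_one lP
  obtain ⟨l, hl⟩ := pow_unbounded_of_one_lt (3 * max lP 1) one_lt_two
  set c := Cμ.toNNReal
  set C₀ : ℝ≥0∞ := gradConst c ((2 * |CP|).toNNReal * c ^ m) * (c : ℝ≥0∞) ^ l
  refine ⟨C₀ + 1, by positivity, by finiteness, ?_⟩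
  intro T _ _ _ _ _ Tt _ _ _ μ μt x₀ α₀ π τ hD hP hπ hτ hμt p q hp hq h hh hint a ha
  have := hP.isFiniteMeasure
  have := hP.isOpenPosMeasure
  rw [← ENNReal.coe_toNNReal hD.ne_top] at hD
  have hPl := hP.localPoincare hD hm
  have hR₀ : 0 < diam (univ : Set T) / (2 ^ m * max lP 1) :=
    div_pos (diam_pos nontrivial_univ isCompact_univ.isBounded) (by positivity)
  have : PathConnectedSpace T :=
    have := hπ.2.2.2
    hπ.2.1.pathConnectedSpace hπ.1.continuous
  have := locallyPathConnectedSpace_of_localPoincare hD hPl hR₀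
  obtain ⟨𝒩, h𝒩, hmod, hle⟩ := exists_surfModOf_eq_zero_forall_le_choquetIntegral hp hD hPl
    (le_max_right _ _) hR₀ hl.le hπ hτ hμt hq hh hint ha
  have hle' : ∀ S ∈ Surfaces μ x₀ α₀ \ 𝒩, a ≤ (C₀ + 1) * choquetIntegral μ S h :=
    fun S hS => (hle S hS).trans (by gcongr; exact le_self_add)
  exact ⟨𝒩, h𝒩, hmod, hle', fun ha0 hatop S hS => one_le_choquetIntegral_div_mul
    (measurableSet_of_mem_surfaces hS.1) (codimH_lt_top_of_mem_surfaces hS.1) hh ha0 hatop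
    (hle' S hS)⟩

open Duality in
/-- Inequality (4.2): for `mod_{p*}`-almost every `S ∈ Γ*` one has
`cap_p T ≤ C ∫_S ρ₀^{p-1} dH`; consequently `(C / cap_p T) ρ₀^{p-1}` is weakly
admissible for `mod_{p*} T` when `cap_p T > 0`. -/
theorem statement10 (Cμ : ℝ≥0∞) (CP lP : ℝ) :
    ∃ C : ℝ≥0∞, 0 < C ∧ C < ⊤ ∧
      ∀ (T : Type) [MetricSpace T] [MeasurableSpace T] [BorelSpace T] [CompactSpace T]
        (Tt : Type) [MetricSpace Tt] [MeasurableSpace Tt] [BorelSpace Tt]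
        (μ : Measure T) (μt : Measure Tt) (x₀ : T) (α₀ : Path x₀ x₀)
        (π : Tt → T) (τ : Tt → Tt),
        Standing μ Cμ CP lP x₀ α₀ → CoverSetup π → IsDeck π x₀ α₀ τ →
        IsLiftedMeasure π μ μt →
        ∀ p : ℝ, 1 < p →
          ∀ ρ₀ : T → ℝ≥0∞,
            MemF π τ μt p ρ₀ →
            cap μ p x₀ α₀ = ∫⁻ x, ρ₀ x ^ p ∂μ →
            (∀ ρ : T → ℝ≥0∞, MemF π τ μt p ρ → (∫⁻ x, ρ x ^ p ∂μ) < ⊤ →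
              cap μ p x₀ α₀ ≤ ∫⁻ x, ρ₀ x ^ (p - 1) * ρ x ∂μ) →
            ∃ 𝒩 ⊆ Surfaces μ x₀ α₀, surfModOf μ (p / (p - 1)) 𝒩 = 0 ∧
              (∀ S ∈ Surfaces μ x₀ α₀ \ 𝒩,
                cap μ p x₀ α₀ ≤ C * choquetIntegral μ S fun x => ρ₀ x ^ (p - 1)) ∧
              (0 < cap μ p x₀ α₀ →
                ∀ S ∈ Surfaces μ x₀ α₀ \ 𝒩,
                  1 ≤ choquetIntegral μ S
                    fun x => (C / cap μ p x₀ α₀) * ρ₀ x ^ (p - 1)) := by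
  obtain ⟨C, hC, hCtop, hgeneral⟩ := statement10_general.{0, 0} Cμ CP lP
  refine ⟨C, hC, hCtop, ?_⟩
  rintro T _ _ _ _ Tt _ _ _ μ μt x₀ α₀ π τ ⟨hD, hP, -, hgen, f, hf⟩ hπ hτ hμt p hp ρ₀ hρ₀ hcap hvar
  have := nontrivial_of_isGenerator hgen
  have := hP.isFiniteMeasure
  have hp₀ : 0 < p := one_pos.trans hp
  have hp' : 0 < p - 1 := sub_pos.2 hp
  have hcaptop : cap μ p x₀ α₀ < ⊤ := cap_lt_top hp₀ hf
  have hint : ∫⁻ x, (ρ₀ x ^ (p - 1)) ^ (p / (p - 1)) ∂μ < ⊤ := by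
    simpa only [← ENNReal.rpow_mul, mul_div_cancel₀ _ hp'.ne', ← hcap] using hcaptop
  obtain ⟨𝒩, h𝒩, hmod, hle, hadm⟩ := hgeneral T Tt μ μt x₀ α₀ π τ hD hP hπ hτ hμt p (p / (p - 1))
    hp₀ ((one_lt_div hp').2 (by linarith)) _ (hρ₀.1.pow_const _) hint _ hvar
  exact ⟨𝒩, h𝒩, hmod, hle, fun hpos => hadm hpos hcaptop⟩
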